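/- There exists a constant C > 0 with the following property. Let m ≥ 1, N = 2^m, and k̃ = m − 1. Let u be four times continuously differentiable on a neighbourhood of [0,1]², vanishing on the boundary of [0,1]², and satisfying −Δu + u = f on Ω = (0,1)². Let V^{(k̃)} be the real span of all functions ψ_i^{N/2^l}(x) ψ_j^{N/2^{k̃−l}}(y) for l = 0, 1, …, k̃, 1 ≤ i ≤ N/2^l − 1, 1 ≤ j ≤ N/2^{k̃−l} − 1. If u^{(k̃)} ∈ V^{(k̃)} satisfies B(u^{(k̃)}, v) = (f, v) for all v ∈ V^{(k̃)}, then |||u − u^{(k̃)}||| ≤ C N^{−1} ( |u|₂ + ‖∂⁴u/∂x²∂y²‖_{0,Ω} ). -/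

import Mathlib

open MeasureTheory Finset

noncomputable section

/-- The hat function `ψ_i^N` on the uniform mesh of `[0,1]` with `N` intervals. -/
def hat (N i : ℕ) (x : ℝ) : ℝ :=
  if ((i : ℝ) - 1) / N ≤ x ∧ x ≤ (i : ℝ) / N then N * (x - ((i : ℝ) - 1) / N)
  else if (i : ℝ) / N ≤ x ∧ x ≤ ((i : ℝ) + 1) / N then N * (((i : ℝ) + 1) / N - x)
  else 0

/-- The nodal piecewise bilinear interpolant `I_{Nx,Ny} u`. -/
def interp (Nx Ny : ℕ) (u : ℝ × ℝ → ℝ) : ℝ × ℝ → ℝ := fun p =>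
  ∑ i ∈ range (Nx + 1), ∑ j ∈ range (Ny + 1),
    u ((i : ℝ) / Nx, (j : ℝ) / Ny) * hat Nx i p.1 * hat Ny j p.2

/-- The one-directional interpolant `I_{Nx,0} u` (interpolation in the `x`-direction only). -/
def interpX (Nx : ℕ) (u : ℝ × ℝ → ℝ) : ℝ × ℝ → ℝ := fun p =>
  ∑ i ∈ range (Nx + 1), u ((i : ℝ) / Nx, p.2) * hat Nx i p.1

/-- The one-directional interpolant `I_{0,Ny} u` (interpolation in the `y`-direction only). -/
def interpY (Ny : ℕ) (u : ℝ × ℝ → ℝ) : ℝ × ℝ → ℝ := fun p =>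
  ∑ j ∈ range (Ny + 1), u (p.1, (j : ℝ) / Ny) * hat Ny j p.2

/-- The two-scale interpolant `Î_{N,N} u = I_{N,σ}u + I_{σ,N}u − I_{σ,σ}u`. -/
def twoScale (N σ : ℕ) (u : ℝ × ℝ → ℝ) : ℝ × ℝ → ℝ := fun p =>
  interp N σ u p + interp σ N u p - interp σ σ u p

/-- The multiscale interpolant
`I^{(k)}_{N,N} u = Σ_{i=0}^{k} I_{N/2^i, N/2^{k−i}}u − Σ_{i=1}^{k} I_{N/2^i, N/2^{k+1−i}}u`. -/
def msInterp (N k : ℕ) (u : ℝ × ℝ → ℝ) : ℝ × ℝ → ℝ := fun p =>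
  ∑ i ∈ range (k + 1), interp (N / 2 ^ i) (N / 2 ^ (k - i)) u p
    - ∑ i ∈ Finset.Icc 1 k, interp (N / 2 ^ i) (N / 2 ^ (k + 1 - i)) u p

/-- The closed square `[0,1]²`. -/
def unitSquare : Set (ℝ × ℝ) := Set.Icc (0 : ℝ) 1 ×ˢ Set.Icc (0 : ℝ) 1

/-- The open square `Ω = (0,1)²`. -/
def Omega2 : Set (ℝ × ℝ) := Set.Ioo (0 : ℝ) 1 ×ˢ Set.Ioo (0 : ℝ) 1

/-- Partial derivative in `x` (defined a.e. for Lipschitz functions; junk value `0` elsewhere). -/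
def pderivX (v : ℝ × ℝ → ℝ) : ℝ × ℝ → ℝ := fun p => deriv (fun x => v (x, p.2)) p.1

/-- Partial derivative in `y` (defined a.e. for Lipschitz functions; junk value `0` elsewhere). -/
def pderivY (v : ℝ × ℝ → ℝ) : ℝ × ℝ → ℝ := fun p => deriv (fun y => v (p.1, y)) p.2

/-- The `L²(Ω)` norm `‖v‖_{0,Ω}`. -/
def L2norm (v : ℝ × ℝ → ℝ) : ℝ := Real.sqrt (∫ p in Omega2, (v p) ^ 2)

/-- The energy norm `|||v||| = (∫_Ω |∇v|² + ∫_Ω v²)^{1/2}`, gradients taken a.e. -/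
def energyNorm (v : ℝ × ℝ → ℝ) : ℝ :=
  Real.sqrt (∫ p in Omega2, ((pderivX v p) ^ 2 + (pderivY v p) ^ 2 + (v p) ^ 2))

/-- `u` is four times continuously differentiable on a neighbourhood of `[0,1]²`. -/
def C4Near (u : ℝ × ℝ → ℝ) : Prop :=
  ∃ U : Set (ℝ × ℝ), IsOpen U ∧ unitSquare ⊆ U ∧ ContDiffOn ℝ 4 u U

/-- `u` vanishes on the boundary of `[0,1]²`. -/
def VanishOnBoundary (u : ℝ × ℝ → ℝ) : Prop :=
  ∀ p ∈ unitSquare, (p.1 = 0 ∨ p.1 = 1 ∨ p.2 = 0 ∨ p.2 = 1) → u p = 0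

/-- The seminorm `|u|₂ = ‖u_xx‖_{0,Ω} + ‖u_xy‖_{0,Ω} + ‖u_yy‖_{0,Ω}`. -/
def semi2 (u : ℝ × ℝ → ℝ) : ℝ :=
  L2norm (pderivX (pderivX u)) + L2norm (pderivX (pderivY u)) + L2norm (pderivY (pderivY u))

/-- The mixed fourth derivative `∂⁴u/∂x²∂y²`. -/
def uxxyy (u : ℝ × ℝ → ℝ) : ℝ × ℝ → ℝ := pderivX (pderivX (pderivY (pderivY u)))

/-- The bilinear form `B(v,w) = ∫_Ω ∇v·∇w + ∫_Ω v w`, gradients taken a.e. -/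
def Bform (v w : ℝ × ℝ → ℝ) : ℝ :=
  ∫ p in Omega2, (pderivX v p * pderivX w p + pderivY v p * pderivY w p + v p * w p)

/-- The multiscale sparse grid finite element space `V^{(k)}_{N,N}`, spanned by the functions
`ψ_i^{N/2^l}(x) ψ_j^{N/2^{k−l}}(y)` for `l = 0,…,k`, `1 ≤ i ≤ N/2^l − 1`,
`1 ≤ j ≤ N/2^{k−l} − 1`. -/
def msSpace (N k : ℕ) : Submodule ℝ (ℝ × ℝ → ℝ) :=
  Submodule.span ℝ
    {g | ∃ l ∈ Finset.range (k + 1), ∃ i ∈ Finset.Icc 1 (N / 2 ^ l - 1),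
        ∃ j ∈ Finset.Icc 1 (N / 2 ^ (k - l) - 1),
          g = fun p : ℝ × ℝ => hat (N / 2 ^ l) i p.1 * hat (N / 2 ^ (k - l)) j p.2}

/-!
By Céa's lemma the Galerkin error is at most `|||u - w|||` for every `w` in the finite element
space, and we take for `w` the multiscale interpolant. Only values in the closed square matter, so
`u` may be replaced by a compactly supported `C⁴` function on the plane.

Let `X_n` and `Y_k` be the remainders of one-directional interpolation. From
`I_{n,k} = 1 - X_n - Y_k + X_n Y_k` the sums defining the multiscale interpolant collapse to
`X_N + Y_N - ∑_{i ≤ k} X_{N/2^i} Y_{N/2^{k-i}} + ∑_{1 ≤ i ≤ k} X_{N/2^i} Y_{N/2^{k+1-i}}`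
for the error. One-dimensional estimates on horizontal and vertical slices bound the first two terms
by `O(N⁻¹) |u|₂` and each mixed term `X_n Y_k u` by `O(n⁻¹ k⁻¹ (n⁻¹ + k⁻¹)) ‖∂⁴u/∂x²∂y²‖`. The mixed
terms therefore add up to `O((2^k)² N⁻³)` times that norm, which is `O(N⁻¹)` as soon as `2^k ≤ N`.
-/

section Hat

variable {n i : ℕ}

lemma hat_eq_max (hn : 0 < n) (i : ℕ) (x : ℝ) : hat n i x = max 0 (1 - |n * x - i|) := by
  have hn' : (0 : ℝ) < n := by exact_mod_cast hn
  have left_value : n * (x - ((i : ℝ) - 1) / n) = n * x - i + 1 := by field_simp; ring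
  have right_value : n * (((i : ℝ) + 1) / n - x) = i + 1 - n * x := by field_simp
  simp only [hat, left_value, right_value, div_le_iff₀' hn', le_div_iff₀' hn']
  grind

lemma sum_mul_hat_eq_on_cell (hi : i < n) (g : ℕ → ℝ) {x : ℝ}
    (hx : x ∈ Set.Icc ((i : ℝ) / n) ((i + 1 : ℕ) / n)) :
    ∑ j ∈ range (n + 1), g j * hat n j x = g i + (g (i + 1) - g i) * (n * x - i) := by
  have hn : 0 < n := by lia
  have hn' : (0 : ℝ) < n := by exact_mod_cast hn
  have hx₁ : (i : ℝ) ≤ n * x := (div_le_iff₀' hn').1 hx.1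
  have hx₂ : n * x ≤ i + 1 := by exact_mod_cast (le_div_iff₀' hn').1 hx.2
  have hat_far : ∀ j ∈ range (n + 1), j ∉ ({i, i + 1} : Finset ℕ) → g j * hat n j x = 0 := by
    intro j _ hj
    rw [hat_eq_max hn, max_eq_left, mul_zero]
    simp only [Finset.mem_insert, Finset.mem_singleton, not_or] at hj
    rcases lt_or_gt_of_ne hj.1 with h | h
    · have : (j : ℝ) + 1 ≤ i := by exact_mod_cast h
      linarith [le_abs_self (n * x - j)]
    · have : (i : ℝ) + 2 ≤ j := by exact_mod_cast (by lia : i + 2 ≤ j)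
      linarith [neg_abs_le (n * x - j)]
  rw [← Finset.sum_subset (by grind) hat_far, Finset.sum_pair (by lia), hat_eq_max hn,
    hat_eq_max hn, Nat.cast_add_one, abs_of_nonneg (by linarith), abs_of_nonpos (by linarith),
    max_eq_right (by linarith), max_eq_right (by linarith)]
  ring

end Hat

section IntervalEstimates

variable {a b : ℝ} {f g : ℝ → ℝ}

lemma integral_sub_mean_sq {c : ℝ} (hf : IntervalIntegrable f volume a b)
    (hf2 : IntervalIntegrable (fun x => f x ^ 2) volume a b)
    (hc : ∫ x in a..b, f x = (b - a) * c) :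
    ∫ x in a..b, (f x - c) ^ 2 = (∫ x in a..b, f x ^ 2) - (b - a) * c ^ 2 := by
  have hcross : IntervalIntegrable (fun x => 2 * c * f x) volume a b := hf.const_mul _
  calc ∫ x in a..b, (f x - c) ^ 2
      = ∫ x in a..b, (f x ^ 2 - 2 * c * f x + c ^ 2) := by congr! 2; ring
    _ = (∫ x in a..b, f x ^ 2) - 2 * c * ((b - a) * c) + (b - a) * c ^ 2 := by
      rw [intervalIntegral.integral_add (hf2.sub hcross) intervalIntegrable_const,
        intervalIntegral.integral_sub hf2 hcross, intervalIntegral.integral_const_mul, hc,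
        intervalIntegral.integral_const, smul_eq_mul]
    _ = _ := by ring

lemma sq_integral_le (hab : a ≤ b) (hf : IntervalIntegrable f volume a b)
    (hf2 : IntervalIntegrable (fun x => f x ^ 2) volume a b) :
    (∫ x in a..b, f x) ^ 2 ≤ (b - a) * ∫ x in a..b, f x ^ 2 := by
  obtain rfl | hlt := hab.eq_or_lt
  · simp
  have hpos : 0 < b - a := sub_pos.2 hlt
  have hmean := integral_sub_mean_sq (c := (∫ x in a..b, f x) / (b - a)) hf hf2 (by field_simp)
  have hnonneg := intervalIntegral.integral_nonneg (μ := volume) hab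
    fun x _ => sq_nonneg (f x - (∫ x in a..b, f x) / (b - a))
  have hsq : (b - a) * ((∫ x in a..b, f x) / (b - a)) ^ 2 = (∫ x in a..b, f x) ^ 2 / (b - a) := by
    field_simp
  rw [hmean, hsq, sub_nonneg, div_le_iff₀' hpos] at hnonneg
  exact hnonneg

lemma sub_sq_le_integral_deriv_sq (hab : a ≤ b) (hf : ContDiff ℝ 1 f) :
    (f b - f a) ^ 2 ≤ (b - a) * ∫ x in a..b, deriv f x ^ 2 := by
  have hf' : Continuous (deriv f) := hf.continuous_deriv le_rfl
  rw [← intervalIntegral.integral_deriv_eq_sub (fun x _ => hf.differentiable one_ne_zero x)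
    (hf'.intervalIntegrable a b)]
  exact sq_integral_le hab (hf'.intervalIntegrable a b) ((hf'.pow 2).intervalIntegrable a b)

lemma integral_sq_le_integral_deriv_sq {z : ℝ} (hz : z ∈ Set.Icc a b) (hf : ContDiff ℝ 1 f)
    (hfz : f z = 0) :
    ∫ x in a..b, f x ^ 2 ≤ (b - a) ^ 2 * ∫ x in a..b, deriv f x ^ 2 := by
  have hf'2 : Continuous fun x => deriv f x ^ 2 := (hf.continuous_deriv le_rfl).pow 2
  have increment : ∀ s t, a ≤ s → s ≤ t → t ≤ b →
      (f t - f s) ^ 2 ≤ (b - a) * ∫ x in a..b, deriv f x ^ 2 := by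
    intro s t has hst htb
    refine (sub_sq_le_integral_deriv_sq hst hf).trans ?_
    have hmono : ∫ x in s..t, deriv f x ^ 2 ≤ ∫ x in a..b, deriv f x ^ 2 :=
      intervalIntegral.integral_mono_interval has hst htb
        (Filter.Eventually.of_forall fun x => sq_nonneg _) (hf'2.intervalIntegrable a b)
    gcongr
    · exact intervalIntegral.integral_nonneg hst fun x _ => sq_nonneg _
    · linarith
  have pointwise : ∀ x ∈ Set.Icc a b, f x ^ 2 ≤ (b - a) * ∫ x in a..b, deriv f x ^ 2 := by
    intro x hx
    obtain h | h := le_total x z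
    · simpa [hfz] using increment x z hx.1 h hz.2
    · simpa [hfz] using increment z x hz.1 h hx.2
  calc ∫ x in a..b, f x ^ 2
      ≤ ∫ _ in a..b, (b - a) * ∫ x in a..b, deriv f x ^ 2 :=
        intervalIntegral.integral_mono_on (hz.1.trans hz.2)
          ((hf.continuous.pow 2).intervalIntegrable a b) intervalIntegrable_const pointwise
    _ = (b - a) ^ 2 * ∫ x in a..b, deriv f x ^ 2 := by
        rw [intervalIntegral.integral_const, smul_eq_mul]; ring

/-- The remainder of the linear interpolation of `g` at the nodes `a` and `b`. -/
def linRem (g : ℝ → ℝ) (a b x : ℝ) : ℝ := g x - (g a + slope g a b * (x - a))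

lemma contDiff_linRem {n : WithTop ℕ∞} (hg : ContDiff ℝ n g) : ContDiff ℝ n (linRem g a b) := by
  unfold linRem; fun_prop

lemma deriv_linRem (hg : Differentiable ℝ g) :
    deriv (linRem g a b) = fun x => deriv g x - slope g a b := by
  funext x
  have hlin : HasDerivAt (fun x => g a + slope g a b * (x - a)) (slope g a b) x := by
    simpa using (((hasDerivAt_id x).sub_const a).const_mul (slope g a b)).const_add (g a)
  exact ((hg x).hasDerivAt.sub hlin).deriv

lemma integral_linRem_sq_le (hab : a ≤ b) (hg : ContDiff ℝ 1 g) :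
    ∫ x in a..b, linRem g a b x ^ 2 ≤ (b - a) ^ 2 * ∫ x in a..b, deriv (linRem g a b) x ^ 2 :=
  integral_sq_le_integral_deriv_sq (Set.left_mem_Icc.2 hab) (contDiff_linRem hg)
    (by simp [linRem])

lemma integral_deriv_linRem_sq_le_integral_deriv_sq (hab : a ≤ b) (hg : ContDiff ℝ 1 g) :
    ∫ x in a..b, deriv (linRem g a b) x ^ 2 ≤ ∫ x in a..b, deriv g x ^ 2 := by
  have hg' : Continuous (deriv g) := hg.continuous_deriv le_rfl
  have hmean : ∫ x in a..b, deriv g x = (b - a) * slope g a b := by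
    rw [intervalIntegral.integral_deriv_eq_sub (fun x _ => hg.differentiable one_ne_zero x)
      (hg'.intervalIntegrable a b), ← smul_eq_mul, sub_smul_slope, vsub_eq_sub]
  rw [deriv_linRem (hg.differentiable one_ne_zero),
    integral_sub_mean_sq (hg'.intervalIntegrable a b) ((hg'.pow 2).intervalIntegrable a b) hmean]
  exact sub_le_self _ (mul_nonneg (sub_nonneg.2 hab) (sq_nonneg _))

lemma integral_deriv_linRem_sq_le_integral_deriv_deriv_sq (hab : a < b) (hg : ContDiff ℝ 2 g) :
    ∫ x in a..b, deriv (linRem g a b) x ^ 2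
      ≤ (b - a) ^ 2 * ∫ x in a..b, deriv (deriv g) x ^ 2 := by
  have hdiff : Differentiable ℝ g := hg.differentiable two_ne_zero
  obtain ⟨z, hz, hslope⟩ := exists_deriv_eq_slope' g hab hdiff.continuous.continuousOn
    hdiff.differentiableOn
  have h := integral_sq_le_integral_deriv_sq (f := fun x => deriv g x - slope g a b)
    (Set.Ioo_subset_Icc_self hz) ((hg.iterate_deriv' 1 1).sub contDiff_const)
    (sub_eq_zero.2 hslope)
  simpa only [deriv_linRem hdiff, deriv_sub_const] using h

end IntervalEstimates

section NodalInterpolation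

variable {n i : ℕ} {g : ℝ → ℝ}

/-- The remainder of piecewise linear interpolation of `g` on the uniform mesh of `[0,1]` with
`n` cells. -/
def nodalRem (n : ℕ) (g : ℝ → ℝ) (x : ℝ) : ℝ :=
  g x - ∑ i ∈ range (n + 1), g ((i : ℝ) / n) * hat n i x

lemma nodalRem_eq_linRem (hi : i < n) {x : ℝ} (hx : x ∈ Set.Icc ((i : ℝ) / n) ((i + 1 : ℕ) / n)) :
    nodalRem n g x = linRem g (i / n) ((i + 1 : ℕ) / n) x := by
  have hn : (n : ℝ) ≠ 0 := by norm_cast; lia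
  rw [nodalRem, sum_mul_hat_eq_on_cell hi (fun j => g (j / n)) hx, linRem, slope_def_field]
  push_cast
  field_simp
  ring

lemma deriv_nodalRem_eq_deriv_linRem (hi : i < n) :
    Set.EqOn (deriv (nodalRem n g)) (deriv (linRem g (i / n) ((i + 1 : ℕ) / n)))
      (Set.Ioo ((i : ℝ) / n) ((i + 1 : ℕ) / n)) := by
  intro x hx
  refine Filter.EventuallyEq.deriv_eq ?_
  filter_upwards [isOpen_Ioo.mem_nhds hx] with y hy
  exact nodalRem_eq_linRem hi (Set.Ioo_subset_Icc_self hy)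

lemma cell_lt (hi : i < n) : (i : ℝ) / n < ((i + 1 : ℕ) : ℝ) / n := by
  have hn : (0 : ℝ) < n := by norm_cast; lia
  gcongr
  simp

lemma cell_length (n i : ℕ) : ((i + 1 : ℕ) : ℝ) / n - (i : ℝ) / n = (n : ℝ)⁻¹ := by
  push_cast; ring

lemma integral_le_of_adjacent_intervals {F G : ℝ → ℝ} {c : ℝ} (x : ℕ → ℝ) (n : ℕ)
    (hF : ∀ i < n, IntervalIntegrable F volume (x i) (x (i + 1)))
    (hG : ∀ i < n, IntervalIntegrable G volume (x i) (x (i + 1)))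
    (h : ∀ i < n, ∫ t in x i..x (i + 1), F t ≤ c * ∫ t in x i..x (i + 1), G t) :
    ∫ t in x 0..x n, F t ≤ c * ∫ t in x 0..x n, G t := by
  rw [← intervalIntegral.sum_integral_adjacent_intervals hF,
    ← intervalIntegral.sum_integral_adjacent_intervals hG, Finset.mul_sum]
  exact Finset.sum_le_sum fun i hi => h i (Finset.mem_range.1 hi)

lemma integral_unit_le_of_cells (hn : 0 < n) {F G : ℝ → ℝ} {c : ℝ}
    (hF : ∀ i < n, IntervalIntegrable F volume (i / n) ((i + 1 : ℕ) / n))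
    (hG : ∀ i < n, IntervalIntegrable G volume (i / n) ((i + 1 : ℕ) / n))
    (h : ∀ i < n, ∫ t in (i / n : ℝ)..(i + 1 : ℕ) / n, F t
      ≤ c * ∫ t in (i / n : ℝ)..(i + 1 : ℕ) / n, G t) :
    ∫ t in (0 : ℝ)..1, F t ≤ c * ∫ t in (0 : ℝ)..1, G t := by
  simpa [hn.ne'] using integral_le_of_adjacent_intervals (fun i : ℕ => (i : ℝ) / n) n hF hG h

lemma integral_nodalRem_sq_cell (hi : i < n) :
    ∫ x in (i / n : ℝ)..(i + 1 : ℕ) / n, nodalRem n g x ^ 2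
      = ∫ x in (i / n : ℝ)..(i + 1 : ℕ) / n, linRem g (i / n) ((i + 1 : ℕ) / n) x ^ 2 :=
  intervalIntegral.integral_congr_Ioo_of_le (cell_lt hi).le fun _ hx =>
    congrArg (· ^ 2) (nodalRem_eq_linRem hi (Set.Ioo_subset_Icc_self hx))

lemma integral_deriv_nodalRem_sq_cell (hi : i < n) :
    ∫ x in (i / n : ℝ)..(i + 1 : ℕ) / n, deriv (nodalRem n g) x ^ 2
      = ∫ x in (i / n : ℝ)..(i + 1 : ℕ) / n,
        deriv (linRem g (i / n) ((i + 1 : ℕ) / n)) x ^ 2 :=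
  intervalIntegral.integral_congr_Ioo_of_le (cell_lt hi).le fun _ hx =>
    congrArg (· ^ 2) (deriv_nodalRem_eq_deriv_linRem hi hx)

lemma intervalIntegrable_nodalRem_sq_cell (hg : Continuous g) (hi : i < n) :
    IntervalIntegrable (fun x => nodalRem n g x ^ 2) volume (i / n) ((i + 1 : ℕ) / n) := by
  have hlin : Continuous fun x => linRem g (i / n) ((i + 1 : ℕ) / n) x ^ 2 := by
    unfold linRem; fun_prop
  refine (hlin.intervalIntegrable _ _).congr_uIoo fun x hx => ?_
  rw [Set.uIoo_of_le (cell_lt hi).le] at hx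
  exact congrArg (· ^ 2) (nodalRem_eq_linRem hi (Set.Ioo_subset_Icc_self hx)).symm

lemma intervalIntegrable_deriv_nodalRem_sq_cell (hg : ContDiff ℝ 1 g) (hi : i < n) :
    IntervalIntegrable (fun x => deriv (nodalRem n g) x ^ 2) volume (i / n) ((i + 1 : ℕ) / n) := by
  have hlin := ((contDiff_linRem (a := i / n) (b := (i + 1 : ℕ) / n) hg).continuous_deriv
    le_rfl).pow 2
  refine (hlin.intervalIntegrable _ _).congr_uIoo fun x hx => ?_
  rw [Set.uIoo_of_le (cell_lt hi).le] at hx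
  exact congrArg (· ^ 2) (deriv_nodalRem_eq_deriv_linRem hi hx).symm

lemma integral_nodalRem_sq_le (hn : 0 < n) (hg : ContDiff ℝ 1 g) :
    ∫ x in (0 : ℝ)..1, nodalRem n g x ^ 2
      ≤ (n : ℝ)⁻¹ ^ 2 * ∫ x in (0 : ℝ)..1, deriv (nodalRem n g) x ^ 2 := by
  refine integral_unit_le_of_cells hn
    (fun i hi => intervalIntegrable_nodalRem_sq_cell hg.continuous hi)
    (fun i hi => intervalIntegrable_deriv_nodalRem_sq_cell hg hi) fun i hi => ?_
  rw [integral_nodalRem_sq_cell hi, integral_deriv_nodalRem_sq_cell hi, ← cell_length n i]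
  exact integral_linRem_sq_le (cell_lt hi).le hg

lemma integral_deriv_nodalRem_sq_le_integral_deriv_sq (hn : 0 < n) (hg : ContDiff ℝ 1 g) :
    ∫ x in (0 : ℝ)..1, deriv (nodalRem n g) x ^ 2 ≤ ∫ x in (0 : ℝ)..1, deriv g x ^ 2 := by
  rw [← one_mul (∫ x in (0 : ℝ)..1, deriv g x ^ 2)]
  refine integral_unit_le_of_cells hn
    (fun i hi => intervalIntegrable_deriv_nodalRem_sq_cell hg hi)
    (fun i _ => ((hg.continuous_deriv le_rfl).pow 2).intervalIntegrable _ _) fun i hi => ?_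
  rw [integral_deriv_nodalRem_sq_cell hi, one_mul]
  exact integral_deriv_linRem_sq_le_integral_deriv_sq (cell_lt hi).le hg

lemma integral_deriv_nodalRem_sq_le_integral_deriv_deriv_sq (hn : 0 < n) (hg : ContDiff ℝ 2 g) :
    ∫ x in (0 : ℝ)..1, deriv (nodalRem n g) x ^ 2
      ≤ (n : ℝ)⁻¹ ^ 2 * ∫ x in (0 : ℝ)..1, deriv (deriv g) x ^ 2 := by
  have hg'' : Continuous (deriv (deriv g)) := (hg.iterate_deriv' 0 2).continuous
  refine integral_unit_le_of_cells hn
    (fun i hi => intervalIntegrable_deriv_nodalRem_sq_cell (hg.of_le one_le_two) hi)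
    (fun i _ => (hg''.pow 2).intervalIntegrable _ _) fun i hi => ?_
  rw [integral_deriv_nodalRem_sq_cell hi, ← cell_length n i]
  exact integral_deriv_linRem_sq_le_integral_deriv_deriv_sq (cell_lt hi) hg

end NodalInterpolation

section BoundedLipschitz

variable {α β : Type*} [PseudoMetricSpace α] [PseudoMetricSpace β] {n : ℕ} {v : ℝ × ℝ → ℝ}

/-- The bounded real-valued Lipschitz functions on `α`; boundedness makes them a subalgebra. -/
def boundedLipschitz (α : Type*) [PseudoMetricSpace α] : Subalgebra ℝ (α → ℝ) where
  carrier := {v | (∃ K, LipschitzWith K v) ∧ ∃ M, ∀ p, |v p| ≤ M}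
  add_mem' := by
    rintro v w ⟨⟨K, hK⟩, M, hM⟩ ⟨⟨L, hL⟩, M', hM'⟩
    exact ⟨⟨K + L, hK.add hL⟩, M + M', fun p => (abs_add_le _ _).trans (add_le_add (hM p) (hM' p))⟩
  mul_mem' := by
    rintro v w ⟨⟨K, hK⟩, M, hM⟩ ⟨⟨L, hL⟩, M', hM'⟩
    refine ⟨⟨_, LipschitzWith.of_dist_le' (K := M * L + K * M') fun p q => ?_⟩, M * M', fun p => ?_⟩
    · calc |v p * w p - v q * w q| = |v p * (w p - w q) + (v p - v q) * w q| := by ring_nf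
        _ ≤ |v p| * |w p - w q| + |v p - v q| * |w q| := by
          simpa only [abs_mul] using abs_add_le (v p * (w p - w q)) ((v p - v q) * w q)
        _ ≤ M * (L * dist p q) + K * dist p q * M' := by
          have hM0 : 0 ≤ M := (abs_nonneg _).trans (hM p)
          have hv : |v p - v q| ≤ K * dist p q := hK.dist_le_mul p q
          have hw : |w p - w q| ≤ L * dist p q := hL.dist_le_mul p q
          gcongr
          exacts [hM p, hM' q]
        _ = (M * L + K * M') * dist p q := by ring
    · simpa only [Pi.mul_apply, abs_mul] using
        mul_le_mul (hM p) (hM' p) (abs_nonneg _) ((abs_nonneg _).trans (hM p))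
  algebraMap_mem' c := ⟨⟨0, LipschitzWith.const c⟩, |c|, fun _ => le_rfl⟩

lemma comp_mem_boundedLipschitz {v : β → ℝ} (hv : v ∈ boundedLipschitz β) {φ : α → β} {L : NNReal}
    (hφ : LipschitzWith L φ) : v ∘ φ ∈ boundedLipschitz α := by
  obtain ⟨⟨K, hK⟩, M, hM⟩ := hv
  exact ⟨⟨K * L, hK.comp hφ⟩, M, fun p => hM (φ p)⟩

lemma contDiff_mem_boundedLipschitz {E : Type*} [NormedAddCommGroup E] [NormedSpace ℝ E]
    {v : E → ℝ} (hv : ContDiff ℝ 1 v) (hs : HasCompactSupport v) : v ∈ boundedLipschitz E :=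
  ⟨hv.lipschitzWith_of_hasCompactSupport hs one_ne_zero,
    hs.exists_bound_of_continuous hv.continuous⟩

lemma lipschitzWith_swap : LipschitzWith 1 (Prod.swap : α × β → β × α) :=
  LipschitzWith.prod_snd.prodMk LipschitzWith.prod_fst |>.weaken (by simp)

lemma comp_swap_mem_boundedLipschitz (hv : v ∈ boundedLipschitz (ℝ × ℝ)) :
    v ∘ Prod.swap ∈ boundedLipschitz (ℝ × ℝ) :=
  comp_mem_boundedLipschitz hv lipschitzWith_swap

lemma hat_mem_boundedLipschitz (hn : 0 < n) (i : ℕ) : hat n i ∈ boundedLipschitz ℝ := by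
  rw [funext (hat_eq_max hn i)]
  refine ⟨⟨n, LipschitzWith.const_max (.of_dist_le_mul fun x y => ?_) 0⟩, 1, fun x => ?_⟩
  · calc |1 - |n * x - i| - (1 - |n * y - i|)| = |(|n * y - i| - |n * x - i|)| := by ring_nf
      _ ≤ |n * y - i - (n * x - i)| := abs_abs_sub_abs_le_abs_sub _ _
      _ = n * |x - y| := by
        rw [abs_sub_comm, sub_sub_sub_cancel_right, ← mul_sub, abs_mul, Nat.abs_cast]
  · rw [abs_of_nonneg (le_max_left _ _)]
    exact max_le zero_le_one (by linarith [abs_nonneg (n * x - i)])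

lemma interpX_mem_boundedLipschitz (hn : 0 < n) (hv : v ∈ boundedLipschitz (ℝ × ℝ)) :
    interpX n v ∈ boundedLipschitz (ℝ × ℝ) := by
  have hsum : interpX n v = ∑ i ∈ range (n + 1),
      (v ∘ fun p : ℝ × ℝ => ((i : ℝ) / n, p.2)) * (hat n i ∘ Prod.fst) := by
    ext p
    simp [interpX]
  rw [hsum]
  exact sum_mem fun i _ => mul_mem
    (comp_mem_boundedLipschitz hv ((LipschitzWith.const _).prodMk LipschitzWith.prod_snd))
    (comp_mem_boundedLipschitz (hat_mem_boundedLipschitz hn i) LipschitzWith.prod_fst)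

end BoundedLipschitz

section PartialDerivatives

variable {v w : ℝ × ℝ → ℝ} {p : ℝ × ℝ}

lemma pderivX_comp_swap (v : ℝ × ℝ → ℝ) : pderivX (v ∘ Prod.swap) = pderivY v ∘ Prod.swap := rfl

lemma pderivY_comp_swap (v : ℝ × ℝ → ℝ) : pderivY (v ∘ Prod.swap) = pderivX v ∘ Prod.swap := rfl

lemma hasDerivAt_slice_fst (hv : DifferentiableAt ℝ v p) :
    HasDerivAt (fun x => v (x, p.2)) (fderiv ℝ v p (1, 0)) p.1 :=
  HasFDerivAt.comp_hasDerivAt (f := fun x : ℝ => (x, p.2)) p.1 hv.hasFDerivAt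
    ((hasDerivAt_id p.1).prodMk (hasDerivAt_const p.1 p.2))

lemma hasDerivAt_slice_snd (hv : DifferentiableAt ℝ v p) :
    HasDerivAt (fun y => v (p.1, y)) (fderiv ℝ v p (0, 1)) p.2 :=
  HasFDerivAt.comp_hasDerivAt (f := fun y : ℝ => (p.1, y)) p.2 hv.hasFDerivAt
    ((hasDerivAt_const p.2 p.1).prodMk (hasDerivAt_id p.2))

lemma pderivX_eq_fderiv (hv : DifferentiableAt ℝ v p) : pderivX v p = fderiv ℝ v p (1, 0) :=
  (hasDerivAt_slice_fst hv).deriv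

lemma pderivY_eq_fderiv (hv : DifferentiableAt ℝ v p) : pderivY v p = fderiv ℝ v p (0, 1) :=
  (hasDerivAt_slice_snd hv).deriv

lemma pderivX_add (hv : DifferentiableAt ℝ v p) (hw : DifferentiableAt ℝ w p) :
    pderivX (v + w) p = pderivX v p + pderivX w p :=
  deriv_add (hasDerivAt_slice_fst hv).differentiableAt (hasDerivAt_slice_fst hw).differentiableAt

lemma pderivY_add (hv : DifferentiableAt ℝ v p) (hw : DifferentiableAt ℝ w p) :
    pderivY (v + w) p = pderivY v p + pderivY w p :=
  deriv_add (hasDerivAt_slice_snd hv).differentiableAt (hasDerivAt_slice_snd hw).differentiableAt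

lemma pderivX_const_smul (c : ℝ) : pderivX (c • v) = c • pderivX v :=
  funext fun _ => deriv_const_smul_field ..

lemma pderivY_const_smul (c : ℝ) : pderivY (c • v) = c • pderivY v :=
  funext fun _ => deriv_const_smul_field ..

lemma pderivX_congr {U : Set (ℝ × ℝ)} (hU : IsOpen U) (h : Set.EqOn v w U) :
    Set.EqOn (pderivX v) (pderivX w) U := by
  intro p hp
  refine Filter.EventuallyEq.deriv_eq ?_
  filter_upwards [(hU.preimage (Continuous.prodMk_left p.2)).mem_nhds hp] with x hx using h hx

lemma pderivY_congr {U : Set (ℝ × ℝ)} (hU : IsOpen U) (h : Set.EqOn v w U) :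
    Set.EqOn (pderivY v) (pderivY w) U := by
  intro p hp
  refine Filter.EventuallyEq.deriv_eq ?_
  filter_upwards [(hU.preimage (Continuous.prodMk_right p.1)).mem_nhds hp] with y hy using h hy

lemma ae_differentiableAt_of_mem_boundedLipschitz (hv : v ∈ boundedLipschitz (ℝ × ℝ)) :
    ∀ᵐ p, DifferentiableAt ℝ v p := by
  obtain ⟨⟨K, hK⟩, -⟩ := hv
  exact hK.ae_differentiableAt

lemma measurable_pderivY (hv : Continuous v) : Measurable (pderivY v) :=
  measurable_deriv_with_param (f := fun x y => v (x, y)) hv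

lemma measurable_pderivX (hv : Continuous v) : Measurable (pderivX v) :=
  (measurable_pderivY (hv.comp continuous_swap)).comp measurable_swap

lemma norm_pderivX_le {K : NNReal} (hv : LipschitzWith K v) (p : ℝ × ℝ) : ‖pderivX v p‖ ≤ K := by
  refine norm_deriv_le_of_lipschitz (f := fun x => v (x, p.2)) (hv.comp ?_ |>.weaken (mul_one K).le)
  exact (LipschitzWith.id.prodMk (LipschitzWith.const p.2)).weaken (by simp)

lemma norm_pderivY_le {K : NNReal} (hv : LipschitzWith K v) (p : ℝ × ℝ) : ‖pderivY v p‖ ≤ K :=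
  norm_pderivX_le ((hv.comp lipschitzWith_swap).weaken (mul_one K).le) p.swap

end PartialDerivatives

section L2

variable {F G v : ℝ × ℝ → ℝ}

lemma isOpen_Omega2 : IsOpen Omega2 := isOpen_Ioo.prod isOpen_Ioo

lemma measurableSet_Omega2 : MeasurableSet Omega2 := isOpen_Omega2.measurableSet

lemma isCompact_unitSquare : IsCompact unitSquare := isCompact_Icc.prod isCompact_Icc

lemma Omega2_subset_unitSquare : Omega2 ⊆ unitSquare :=
  Set.prod_mono Set.Ioo_subset_Icc_self Set.Ioo_subset_Icc_self

lemma Omega2_ae_eq_unitSquare : (Omega2 : Set (ℝ × ℝ)) =ᵐ[volume] unitSquare :=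
  Measure.set_prod_ae_eq Ioo_ae_eq_Icc Ioo_ae_eq_Icc

lemma swap_mem_Omega2 {p : ℝ × ℝ} : p.swap ∈ Omega2 ↔ p ∈ Omega2 := and_comm

instance isFiniteMeasure_restrict_Omega2 : IsFiniteMeasure (volume.restrict Omega2) :=
  isFiniteMeasure_restrict.2
    (measure_ne_top_of_subset Omega2_subset_unitSquare isCompact_unitSquare.measure_ne_top)

lemma memLp_boundedLipschitz (hv : v ∈ boundedLipschitz (ℝ × ℝ)) :
    MemLp v 2 (volume.restrict Omega2) := by
  obtain ⟨⟨K, hK⟩, M, hM⟩ := hv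
  exact MemLp.of_bound hK.continuous.aestronglyMeasurable M (Filter.Eventually.of_forall hM)

lemma memLp_pderivX (hv : v ∈ boundedLipschitz (ℝ × ℝ)) :
    MemLp (pderivX v) 2 (volume.restrict Omega2) := by
  obtain ⟨⟨K, hK⟩, -⟩ := hv
  exact MemLp.of_bound (measurable_pderivX hK.continuous).aestronglyMeasurable K
    (Filter.Eventually.of_forall (norm_pderivX_le hK))

lemma memLp_pderivY (hv : v ∈ boundedLipschitz (ℝ × ℝ)) :
    MemLp (pderivY v) 2 (volume.restrict Omega2) := by
  obtain ⟨⟨K, hK⟩, -⟩ := hv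
  exact MemLp.of_bound (measurable_pderivY hK.continuous).aestronglyMeasurable K
    (Filter.Eventually.of_forall (norm_pderivY_le hK))

lemma L2norm_nonneg (F : ℝ × ℝ → ℝ) : 0 ≤ L2norm F := Real.sqrt_nonneg _

lemma L2norm_sq (F : ℝ × ℝ → ℝ) : L2norm F ^ 2 = ∫ p in Omega2, F p ^ 2 :=
  Real.sq_sqrt (integral_nonneg fun _ => sq_nonneg _)

lemma L2norm_congr (h : Set.EqOn F G Omega2) : L2norm F = L2norm G :=
  congrArg Real.sqrt (setIntegral_congr_fun measurableSet_Omega2 fun _ hp =>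
    congrArg (· ^ 2) (h hp))

lemma integral_Omega2_swap (F : ℝ × ℝ → ℝ) : ∫ p in Omega2, F p.swap = ∫ p in Omega2, F p :=
  setIntegral_prod_swap _ _ F

lemma L2norm_comp_swap (F : ℝ × ℝ → ℝ) : L2norm (F ∘ Prod.swap) = L2norm F :=
  congrArg Real.sqrt (integral_Omega2_swap fun p => F p ^ 2)

lemma integral_Omega2_eq (hF : IntegrableOn F Omega2) :
    ∫ p in Omega2, F p = ∫ y in Set.Ioo (0 : ℝ) 1, ∫ x in (0 : ℝ)..1, F (x, y) := by
  simp_rw [intervalIntegral.integral_of_le zero_le_one, integral_Ioc_eq_integral_Ioo]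
  rw [← integral_Omega2_swap F]
  exact setIntegral_prod (fun p : ℝ × ℝ => F p.swap) (IntegrableOn.swap hF)

lemma integrableOn_integral_slice (hF : IntegrableOn F Omega2) :
    IntegrableOn (fun y => ∫ x in (0 : ℝ)..1, F (x, y)) (Set.Ioo 0 1) := by
  simp_rw [intervalIntegral.integral_of_le zero_le_one, integral_Ioc_eq_integral_Ioo]
  have h : IntegrableOn (F ∘ Prod.swap) (Set.Ioo (0 : ℝ) 1 ×ˢ Set.Ioo (0 : ℝ) 1)
      (volume.prod volume) := IntegrableOn.swap hF
  rw [IntegrableOn, ← Measure.prod_restrict] at h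
  exact h.integral_prod_left

lemma L2norm_le_of_slices (hF : MemLp F 2 (volume.restrict Omega2))
    (hG : MemLp G 2 (volume.restrict Omega2)) {c : ℝ} (hc : 0 ≤ c)
    (h : ∀ y, ∫ x in (0 : ℝ)..1, F (x, y) ^ 2 ≤ c ^ 2 * ∫ x in (0 : ℝ)..1, G (x, y) ^ 2) :
    L2norm F ≤ c * L2norm G := by
  refine le_of_sq_le_sq ?_ (mul_nonneg hc (L2norm_nonneg G))
  rw [mul_pow, L2norm_sq, L2norm_sq, integral_Omega2_eq hF.integrable_sq,
    integral_Omega2_eq hG.integrable_sq, ← integral_const_mul]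
  exact integral_mono (integrableOn_integral_slice hF.integrable_sq)
    ((integrableOn_integral_slice hG.integrable_sq).const_mul _) h

end L2

section Energy

variable {u v w : ℝ × ℝ → ℝ}

/-- The pointwise first-order jet `(∂v/∂x, ∂v/∂y, v)`. -/
def jet (v : ℝ × ℝ → ℝ) (p : ℝ × ℝ) : EuclideanSpace ℝ (Fin 3) :=
  !₂[pderivX v p, pderivY v p, v p]

lemma inner_jet (v w : ℝ × ℝ → ℝ) (p : ℝ × ℝ) :
    inner ℝ (jet v p) (jet w p)
      = pderivX v p * pderivX w p + pderivY v p * pderivY w p + v p * w p := by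
  simp [jet, PiLp.inner_apply, Fin.sum_univ_three, mul_comm]

lemma memLp_jet (hv : v ∈ boundedLipschitz (ℝ × ℝ)) :
    MemLp (jet v) 2 (volume.restrict Omega2) := by
  refine memLp_piLp_iff.2 fun i => ?_
  fin_cases i
  exacts [memLp_pderivX hv, memLp_pderivY hv, memLp_boundedLipschitz hv]

lemma jet_add_ae (hv : v ∈ boundedLipschitz (ℝ × ℝ)) (hw : w ∈ boundedLipschitz (ℝ × ℝ)) :
    jet (v + w) =ᵐ[volume] jet v + jet w := by
  filter_upwards [ae_differentiableAt_of_mem_boundedLipschitz hv,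
    ae_differentiableAt_of_mem_boundedLipschitz hw] with p hvp hwp
  ext i
  fin_cases i
  exacts [pderivX_add hvp hwp, pderivY_add hvp hwp, rfl]

lemma jet_const_smul (c : ℝ) (v : ℝ × ℝ → ℝ) : jet (c • v) = c • jet v := by
  ext p i
  fin_cases i
  exacts [congrFun (pderivX_const_smul c) p, congrFun (pderivY_const_smul c) p, rfl]

/-- The jet as a linear map into `L²(Ω; ℝ³)`. It pulls the inner product back to `B` and the norm
back to the energy norm, so the Hilbert space theory of `L²` applies to both. -/
def jetLp : boundedLipschitz (ℝ × ℝ) →ₗ[ℝ]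
    Lp (EuclideanSpace ℝ (Fin 3)) 2 (volume.restrict Omega2) where
  toFun v := (memLp_jet v.2).toLp
  map_add' v w := by
    rw [← MemLp.toLp_add]
    exact MemLp.toLp_congr _ _ (ae_restrict_of_ae (jet_add_ae v.2 w.2))
  map_smul' c v := by
    rw [RingHom.id_apply, ← MemLp.toLp_const_smul]
    exact MemLp.toLp_congr _ _ (.of_eq (jet_const_smul c v))

lemma inner_jetLp (v w : boundedLipschitz (ℝ × ℝ)) :
    inner ℝ (jetLp v) (jetLp w) = Bform v w := by
  rw [L2.inner_def]
  refine integral_congr_ae ?_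
  filter_upwards [(memLp_jet v.2).coeFn_toLp, (memLp_jet w.2).coeFn_toLp] with p hv hw
  simpa only [jetLp, LinearMap.coe_mk, AddHom.coe_mk, hv, hw] using inner_jet v w p

lemma norm_jetLp (v : boundedLipschitz (ℝ × ℝ)) : ‖jetLp v‖ = energyNorm v := by
  rw [norm_eq_sqrt_real_inner, inner_jetLp, Bform, energyNorm]
  simp only [sq]

lemma energyNorm_add_le (hv : v ∈ boundedLipschitz (ℝ × ℝ)) (hw : w ∈ boundedLipschitz (ℝ × ℝ)) :
    energyNorm (v + w) ≤ energyNorm v + energyNorm w := by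
  simpa only [← map_add, norm_jetLp, Subalgebra.coe_add]
    using norm_add_le (jetLp ⟨v, hv⟩) (jetLp ⟨w, hw⟩)

lemma energyNorm_sub_le (hv : v ∈ boundedLipschitz (ℝ × ℝ)) (hw : w ∈ boundedLipschitz (ℝ × ℝ)) :
    energyNorm (v - w) ≤ energyNorm v + energyNorm w := by
  simpa only [← map_sub, norm_jetLp, Subalgebra.coe_sub]
    using norm_sub_le (jetLp ⟨v, hv⟩) (jetLp ⟨w, hw⟩)

lemma energyNorm_sum_le {ι : Type*} (s : Finset ι) {v : ι → ℝ × ℝ → ℝ}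
    (hv : ∀ i ∈ s, v i ∈ boundedLipschitz (ℝ × ℝ)) :
    energyNorm (∑ i ∈ s, v i) ≤ ∑ i ∈ s, energyNorm (v i) := by
  rw [← sum_attach, ← sum_attach s fun i => energyNorm (v i)]
  simpa only [← map_sum, norm_jetLp, AddSubmonoidClass.coe_finsetSum]
    using norm_sum_le s.attach fun i => jetLp ⟨v i, hv i i.2⟩

lemma Bform_sub_left (hu : u ∈ boundedLipschitz (ℝ × ℝ)) (hv : v ∈ boundedLipschitz (ℝ × ℝ))
    (hw : w ∈ boundedLipschitz (ℝ × ℝ)) : Bform (u - v) w = Bform u w - Bform v w := by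
  simpa only [← map_sub, inner_jetLp, Subalgebra.coe_sub]
    using inner_sub_left (𝕜 := ℝ) (jetLp ⟨u, hu⟩) (jetLp ⟨v, hv⟩) (jetLp ⟨w, hw⟩)

lemma energyNorm_le_energyNorm_add_of_Bform_eq_zero (hv : v ∈ boundedLipschitz (ℝ × ℝ))
    (hw : w ∈ boundedLipschitz (ℝ × ℝ)) (h : Bform v w = 0) :
    energyNorm v ≤ energyNorm (v + w) := by
  have horth : inner ℝ (jetLp ⟨v, hv⟩) (jetLp ⟨w, hw⟩) = 0 := (inner_jetLp _ _).trans h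
  have hpyth := norm_add_sq_eq_norm_sq_add_norm_sq_real horth
  rw [← map_add, norm_jetLp, norm_jetLp] at hpyth
  refine le_of_sq_le_sq ?_ (Real.sqrt_nonneg _)
  rw [sq, sq (energyNorm (v + w))]
  exact hpyth.symm ▸ le_add_of_nonneg_right (mul_self_nonneg _)

lemma energyNorm_sq (hv : v ∈ boundedLipschitz (ℝ × ℝ)) :
    energyNorm v ^ 2 = L2norm (pderivX v) ^ 2 + L2norm (pderivY v) ^ 2 + L2norm v ^ 2 := by
  have hx := (memLp_pderivX hv).integrable_sq
  have hy := (memLp_pderivY hv).integrable_sq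
  rw [energyNorm, Real.sq_sqrt (integral_nonneg fun p => by positivity)]
  simp only [L2norm_sq]
  exact (integral_add (hx.add hy) (memLp_boundedLipschitz hv).integrable_sq).trans
    (congrArg (· + _) (integral_add hx hy))

lemma energyNorm_le (hv : v ∈ boundedLipschitz (ℝ × ℝ)) :
    energyNorm v ≤ L2norm (pderivX v) + L2norm (pderivY v) + L2norm v := by
  have hx := L2norm_nonneg (pderivX v)
  have hy := L2norm_nonneg (pderivY v)
  have h0 := L2norm_nonneg v
  refine le_of_sq_le_sq ?_ (by positivity)
  rw [energyNorm_sq hv]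
  nlinarith

lemma energyNorm_comp_swap (v : ℝ × ℝ → ℝ) : energyNorm (v ∘ Prod.swap) = energyNorm v := by
  have hswap := integral_Omega2_swap fun p => pderivY v p ^ 2 + pderivX v p ^ 2 + v p ^ 2
  rw [energyNorm, energyNorm]
  simp only [add_comm (pderivX v _ ^ 2)]
  exact congrArg Real.sqrt hswap

lemma energyNorm_congr (h : Set.EqOn v w Omega2) : energyNorm v = energyNorm w := by
  refine congrArg Real.sqrt (setIntegral_congr_fun measurableSet_Omega2 fun p hp => ?_)
  simp only [pderivX_congr isOpen_Omega2 h hp, pderivY_congr isOpen_Omega2 h hp, h hp]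

end Energy

/-- `u` is `n` times continuously differentiable on the plane, with compact support. Since all the
quantities to be estimated live on `Ω`, such functions can stand in for the solution. -/
structure IsTestFunction (n : ℕ) (u : ℝ × ℝ → ℝ) : Prop where
  contDiff : ContDiff ℝ n u
  hasCompactSupport : HasCompactSupport u

namespace IsTestFunction

variable {m n : ℕ} {u : ℝ × ℝ → ℝ}

lemma of_le (hu : IsTestFunction n u) (h : m ≤ n) : IsTestFunction m u :=
  ⟨hu.contDiff.of_le (by exact_mod_cast h), hu.hasCompactSupport⟩

lemma differentiable (hu : IsTestFunction (n + 1) u) : Differentiable ℝ u :=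
  hu.contDiff.differentiable (by norm_cast)

lemma mem_boundedLipschitz (hu : IsTestFunction (n + 1) u) : u ∈ boundedLipschitz (ℝ × ℝ) :=
  contDiff_mem_boundedLipschitz (hu.contDiff.of_le (by norm_cast; lia)) hu.hasCompactSupport

lemma comp_swap (hu : IsTestFunction n u) : IsTestFunction n (u ∘ Prod.swap) :=
  ⟨hu.contDiff.comp (contDiff_snd.prodMk contDiff_fst),
    hu.hasCompactSupport.comp_homeomorph (Homeomorph.prodComm ℝ ℝ)⟩

lemma pderivX_eq (hu : IsTestFunction (n + 1) u) : pderivX u = fun p => fderiv ℝ u p (1, 0) :=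
  funext fun p => pderivX_eq_fderiv (hu.differentiable p)

lemma pderivY_eq (hu : IsTestFunction (n + 1) u) : pderivY u = fun p => fderiv ℝ u p (0, 1) :=
  funext fun p => pderivY_eq_fderiv (hu.differentiable p)

protected lemma pderivX (hu : IsTestFunction (n + 1) u) : IsTestFunction n (pderivX u) := by
  rw [hu.pderivX_eq]
  exact ⟨(hu.contDiff.fderiv_right (by norm_cast)).clm_apply contDiff_const,
    hu.hasCompactSupport.fderiv_apply ℝ (1, 0)⟩

protected lemma pderivY (hu : IsTestFunction (n + 1) u) : IsTestFunction n (pderivY u) :=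
  hu.comp_swap.pderivX.comp_swap

lemma pderivX_pderivY_comm (hu : IsTestFunction 2 u) :
    pderivX (pderivY u) = pderivY (pderivX u) := by
  have hfderiv : Differentiable ℝ (fderiv ℝ u) :=
    (hu.contDiff.fderiv_right (m := 1) (by norm_num)).differentiable one_ne_zero
  rw [hu.pderivY.pderivX_eq, hu.pderivX.pderivY_eq, hu.pderivX_eq, hu.pderivY_eq]
  funext p
  simpa [fderiv_clm_apply (hfderiv p) (differentiableAt_const _)]
    using hu.contDiff.contDiffAt.isSymmSndFDerivAt (by simp) (1, 0) (0, 1)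

lemma uxxyy_eq (hu : IsTestFunction 4 u) :
    uxxyy u = pderivY (pderivY (pderivX (pderivX u))) := by
  rw [uxxyy, (hu.pderivY.of_le (by lia)).pderivX_pderivY_comm,
    (hu.of_le (by lia)).pderivX_pderivY_comm, hu.pderivX.pderivY.pderivX_pderivY_comm,
    (hu.pderivX.of_le (by lia)).pderivX_pderivY_comm]

lemma L2norm_uxxyy_comp_swap (hu : IsTestFunction 4 u) :
    L2norm (uxxyy (u ∘ Prod.swap)) = L2norm (uxxyy u) := by
  rw [hu.uxxyy_eq]
  simp only [uxxyy, pderivX_comp_swap, pderivY_comp_swap, L2norm_comp_swap]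

lemma semi2_comp_swap (hu : IsTestFunction 2 u) : semi2 (u ∘ Prod.swap) = semi2 u := by
  simp only [semi2, pderivX_comp_swap, pderivY_comp_swap, L2norm_comp_swap,
    hu.pderivX_pderivY_comm]
  ring

end IsTestFunction

lemma C4Near.exists_isTestFunction {u : ℝ × ℝ → ℝ} (hu : C4Near u) :
    ∃ w, IsTestFunction 4 w ∧ Set.EqOn u w unitSquare := by
  obtain ⟨U, hU, hsub, hC⟩ := hu
  obtain ⟨K, hK, hSK, hKU⟩ := exists_compact_between isCompact_unitSquare hU hsub
  obtain ⟨χ, hχ_one, hχ_zero, -⟩ := exists_contMDiffMap_one_nhds_of_subset_interior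
    (n := 4) (modelWithCornersSelf ℝ (ℝ × ℝ)) isCompact_unitSquare.isClosed hSK
  have hχ : ContDiff ℝ 4 χ := χ.contMDiff.contDiff
  refine ⟨χ * u, ⟨contDiff_iff_contDiffAt.2 fun p => ?_,
    HasCompactSupport.intro hK fun p hp => by simp [hχ_zero p hp]⟩,
    fun p hp => by simp [hχ_one.self_of_nhdsSet p hp]⟩
  by_cases hp : p ∈ K
  · exact hχ.contDiffAt.mul (hC.contDiffAt (hU.mem_nhds (hKU hp)))
  · refine (contDiffAt_const (c := (0 : ℝ))).congr_of_eventuallyEq ?_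
    filter_upwards [hK.isClosed.isOpen_compl.mem_nhds hp] with q hq
    simp [hχ_zero q hq]

section WeakForm

variable {u v : ℝ × ℝ → ℝ}

/-- The conforming functions: bounded, Lipschitz and zero outside `Ω`. They play the role of
`H¹₀(Ω)`. -/
def lipschitzZero : Submodule ℝ (ℝ × ℝ → ℝ) where
  carrier := {v | v ∈ boundedLipschitz (ℝ × ℝ) ∧ ∀ p ∉ Omega2, v p = 0}
  zero_mem' := ⟨zero_mem _, fun _ _ => rfl⟩
  add_mem' hv hw := ⟨add_mem hv.1 hw.1, fun p hp => by simp [hv.2 p hp, hw.2 p hp]⟩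
  smul_mem' c _ hv := ⟨Subalgebra.smul_mem _ hv.1 c, fun p hp => by simp [hv.2 p hp]⟩

lemma comp_swap_mem_lipschitzZero (hv : v ∈ lipschitzZero) : v ∘ Prod.swap ∈ lipschitzZero :=
  ⟨comp_swap_mem_boundedLipschitz hv.1, fun _ hp => hv.2 _ (mt swap_mem_Omega2.1 hp)⟩

lemma pderivX_eq_zero_of_mem_lipschitzZero (hv : v ∈ lipschitzZero) {p : ℝ × ℝ}
    (hp : p ∉ unitSquare) : pderivX v p = 0 := by
  have hzero : Set.EqOn v (fun _ => 0) unitSquareᶜ :=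
    fun q hq => hv.2 q (Set.notMem_subset Omega2_subset_unitSquare hq)
  rw [pderivX_congr isCompact_unitSquare.isClosed.isOpen_compl hzero hp]
  exact deriv_const _ _

lemma integral_mul_pderivX (hu : u ∈ boundedLipschitz (ℝ × ℝ)) (hv : v ∈ lipschitzZero) :
    ∫ p in Omega2, u p * pderivX v p = -∫ p in Omega2, pderivX u p * v p := by
  obtain ⟨K, hK⟩ := hu.1
  obtain ⟨L, hL⟩ := hv.1.1
  have hsupp : HasCompactSupport v := HasCompactSupport.intro isCompact_unitSquare
    fun p hp => hv.2 p (Set.notMem_subset Omega2_subset_unitSquare hp)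
  have huv : ∫ p, lineDeriv ℝ u p (1, 0) * v p = ∫ p in Omega2, pderivX u p * v p := by
    rw [setIntegral_eq_integral_of_forall_compl_eq_zero fun p hp => by rw [hv.2 p hp, mul_zero]]
    refine integral_congr_ae ?_
    filter_upwards [ae_differentiableAt_of_mem_boundedLipschitz hu] with p hp
    rw [hp.lineDeriv_eq_fderiv, pderivX_eq_fderiv hp]
  have hvu : ∫ p, lineDeriv ℝ v p (-(1, 0)) * u p = -∫ p in Omega2, u p * pderivX v p := by
    rw [setIntegral_congr_set Omega2_ae_eq_unitSquare,
      setIntegral_eq_integral_of_forall_compl_eq_zero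
        fun p hp => by rw [pderivX_eq_zero_of_mem_lipschitzZero hv hp, mul_zero], ← integral_neg]
    refine integral_congr_ae ?_
    filter_upwards [ae_differentiableAt_of_mem_boundedLipschitz hv.1] with p hp
    rw [hp.lineDeriv_eq_fderiv, pderivX_eq_fderiv hp, map_neg]
    ring
  rw [← huv, hK.integral_lineDeriv_mul_eq hL hsupp, hvu, neg_neg]

lemma integral_mul_pderivY (hu : u ∈ boundedLipschitz (ℝ × ℝ)) (hv : v ∈ lipschitzZero) :
    ∫ p in Omega2, u p * pderivY v p = -∫ p in Omega2, pderivY u p * v p := by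
  rw [← integral_Omega2_swap fun p => u p * pderivY v p,
    ← integral_Omega2_swap fun p => pderivY u p * v p]
  exact integral_mul_pderivX (comp_swap_mem_boundedLipschitz hu) (comp_swap_mem_lipschitzZero hv)

lemma Bform_eq_integral_neg_laplacian_add (hu : IsTestFunction 2 u) (hv : v ∈ lipschitzZero) :
    Bform u v
      = ∫ p in Omega2, (-(pderivX (pderivX u) p + pderivY (pderivY u) p) + u p) * v p := by
  have hux := hu.pderivX.mem_boundedLipschitz
  have huy := hu.pderivY.mem_boundedLipschitz
  have hv2 := memLp_boundedLipschitz hv.1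
  have hxx := (memLp_pderivX hux).integrable_mul hv2
  have hyy := (memLp_pderivY huy).integrable_mul hv2
  have h0 := (memLp_boundedLipschitz hu.mem_boundedLipschitz).integrable_mul hv2
  have hx := (memLp_boundedLipschitz hux).integrable_mul (memLp_pderivX hv.1)
  have hy := (memLp_boundedLipschitz huy).integrable_mul (memLp_pderivY hv.1)
  calc Bform u v
      = (∫ p in Omega2, pderivX u p * pderivX v p) + (∫ p in Omega2, pderivY u p * pderivY v p)
          + ∫ p in Omega2, u p * v p :=
        (integral_add (hx.add hy) h0).trans (congrArg (· + _) (integral_add hx hy))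
    _ = -((∫ p in Omega2, pderivX (pderivX u) p * v p)
          + ∫ p in Omega2, pderivY (pderivY u) p * v p) + ∫ p in Omega2, u p * v p := by
        rw [integral_mul_pderivX hux hv, integral_mul_pderivY huy hv, neg_add]
    _ = ∫ p in Omega2, (-(pderivX (pderivX u) * v + pderivY (pderivY u) * v) + u * v) p := by
        rw [integral_add' (hxx.add hyy).neg h0, integral_neg', integral_add' hxx hyy]
        rfl
    _ = _ := by
        refine integral_congr_ae (.of_forall fun p => ?_)
        simp only [Pi.add_apply, Pi.neg_apply, Pi.mul_apply]
        ring

/-- Céa's lemma; since `B` is the energy inner product, the constant is `1`. -/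
lemma energyNorm_sub_le_of_galerkin {V : Submodule ℝ (ℝ × ℝ → ℝ)} (hV : V ≤ lipschitzZero)
    (hu : u ∈ boundedLipschitz (ℝ × ℝ)) {uh w : ℝ × ℝ → ℝ} (huh : uh ∈ V) (hw : w ∈ V)
    (hgal : ∀ v ∈ V, Bform uh v = Bform u v) :
    energyNorm (u - uh) ≤ energyNorm (u - w) := by
  have hdiff : uh - w ∈ V := sub_mem huh hw
  have horth : Bform (u - uh) (uh - w) = 0 := by
    rw [Bform_sub_left hu (hV huh).1 (hV hdiff).1, hgal _ hdiff, sub_self]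
  have h := energyNorm_le_energyNorm_add_of_Bform_eq_zero (sub_mem hu (hV huh).1) (hV hdiff).1 horth
  rwa [sub_add_sub_cancel] at h

end WeakForm

section Remainders

variable {n k : ℕ} {u v : ℝ × ℝ → ℝ}

/-- The remainder of interpolation in the `x`-direction. -/
def remX (n : ℕ) (u : ℝ × ℝ → ℝ) : ℝ × ℝ → ℝ := u - interpX n u

/-- The remainder of interpolation in the `y`-direction. -/
def remY (n : ℕ) (u : ℝ × ℝ → ℝ) : ℝ × ℝ → ℝ := u - interpY n u

lemma remX_comp_swap (n : ℕ) (u : ℝ × ℝ → ℝ) : remX n (u ∘ Prod.swap) = remY n u ∘ Prod.swap := rfl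

lemma remY_comp_swap (n : ℕ) (u : ℝ × ℝ → ℝ) : remY n (u ∘ Prod.swap) = remX n u ∘ Prod.swap := rfl

lemma interp_eq_interpX_interpY (n k : ℕ) (u : ℝ × ℝ → ℝ) :
    interp n k u = interpX n (interpY k u) := by
  ext p
  simp only [interp, interpX, interpY, Finset.sum_mul]
  exact Finset.sum_congr rfl fun i _ => Finset.sum_congr rfl fun j _ => mul_right_comm ..

lemma interpX_interpY_comm (n k : ℕ) (u : ℝ × ℝ → ℝ) :
    interpX n (interpY k u) = interpY k (interpX n u) := by
  rw [← interp_eq_interpX_interpY]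
  ext p
  simp only [interp, interpX, interpY, Finset.sum_mul]
  exact Finset.sum_comm

lemma interpX_sub (n : ℕ) (u v : ℝ × ℝ → ℝ) : interpX n (u - v) = interpX n u - interpX n v := by
  ext p
  simp [interpX, sub_mul]

lemma interpY_sub (n : ℕ) (u v : ℝ × ℝ → ℝ) : interpY n (u - v) = interpY n u - interpY n v := by
  ext p
  simp [interpY, sub_mul]

lemma interp_eq_sub_rem (n k : ℕ) (u : ℝ × ℝ → ℝ) :
    interp n k u = u - remX n u - remY k u + remX n (remY k u) := by
  simp only [remX, remY, interpX_sub, interp_eq_interpX_interpY]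
  abel

lemma remX_remY_comm (n k : ℕ) (u : ℝ × ℝ → ℝ) : remX n (remY k u) = remY k (remX n u) := by
  simp only [remX, remY, interpX_sub, interpY_sub, interpX_interpY_comm]
  abel

lemma remX_mem_boundedLipschitz (hn : 0 < n) (hv : v ∈ boundedLipschitz (ℝ × ℝ)) :
    remX n v ∈ boundedLipschitz (ℝ × ℝ) :=
  sub_mem hv (interpX_mem_boundedLipschitz hn hv)

lemma remY_mem_boundedLipschitz (hn : 0 < n) (hv : v ∈ boundedLipschitz (ℝ × ℝ)) :
    remY n v ∈ boundedLipschitz (ℝ × ℝ) :=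
  comp_swap_mem_boundedLipschitz
    (remX_mem_boundedLipschitz hn (comp_swap_mem_boundedLipschitz hv))

lemma pderivX_remY (hv : Differentiable ℝ v) : pderivX (remY n v) = remY n (pderivX v) := by
  ext p
  have hslice : ∀ y, HasDerivAt (fun x => v (x, y)) (pderivX v (p.1, y)) p.1 := fun y => by
    rw [pderivX_eq_fderiv (hv _)]
    exact hasDerivAt_slice_fst (hv (p.1, y))
  exact ((hslice p.2).sub (HasDerivAt.fun_sum (u := range (n + 1))
    fun j _ => (hslice ((j : ℝ) / n)).mul_const (hat n j p.2))).deriv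

lemma pderivY_remX (hv : Differentiable ℝ v) : pderivY (remX n v) = remX n (pderivY v) := by
  have h := pderivX_remY (n := n) (hv.comp (differentiable_snd.prodMk differentiable_fst))
  exact congrArg (· ∘ Prod.swap) h

lemma contDiff_remY_slice {d : WithTop ℕ∞} (hu : ContDiff ℝ d u) (y : ℝ) :
    ContDiff ℝ d fun x => remY k u (x, y) := by
  have hslice : ∀ t, ContDiff ℝ d fun x => u (x, t) := fun t => by fun_prop
  exact (hslice y).sub
    (ContDiff.sum fun j _ => (hslice _).mul (contDiff_const (c := hat k j y)))

lemma L2norm_remX_le_mul (hn : 0 < n) (hv : v ∈ boundedLipschitz (ℝ × ℝ))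
    (hslice : ∀ y, ContDiff ℝ 1 fun x => v (x, y)) :
    L2norm (remX n v) ≤ (n : ℝ)⁻¹ * L2norm (pderivX (remX n v)) :=
  have hrem := remX_mem_boundedLipschitz hn hv
  L2norm_le_of_slices (memLp_boundedLipschitz hrem) (memLp_pderivX hrem) (by positivity)
    fun y => integral_nodalRem_sq_le hn (hslice y)

lemma L2norm_remX_le_L2norm_pderivX_remX (hn : 0 < n) (hv : v ∈ boundedLipschitz (ℝ × ℝ))
    (hslice : ∀ y, ContDiff ℝ 1 fun x => v (x, y)) :
    L2norm (remX n v) ≤ L2norm (pderivX (remX n v)) :=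
  (L2norm_remX_le_mul hn hv hslice).trans <| mul_le_of_le_one_left (L2norm_nonneg _) <|
    inv_le_one_of_one_le₀ (by exact_mod_cast hn)

lemma L2norm_pderivX_remX_le_L2norm_pderivX (hn : 0 < n) (hv : v ∈ boundedLipschitz (ℝ × ℝ))
    (hslice : ∀ y, ContDiff ℝ 1 fun x => v (x, y)) :
    L2norm (pderivX (remX n v)) ≤ L2norm (pderivX v) := by
  simpa only [one_mul] using L2norm_le_of_slices
    (memLp_pderivX (remX_mem_boundedLipschitz hn hv)) (memLp_pderivX hv) zero_le_one fun y => by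
      rw [one_pow, one_mul]
      exact integral_deriv_nodalRem_sq_le_integral_deriv_sq hn (hslice y)

lemma L2norm_pderivX_remX_le_mul (hn : 0 < n) (hv : v ∈ boundedLipschitz (ℝ × ℝ))
    (hvx : pderivX v ∈ boundedLipschitz (ℝ × ℝ)) (hslice : ∀ y, ContDiff ℝ 2 fun x => v (x, y)) :
    L2norm (pderivX (remX n v)) ≤ (n : ℝ)⁻¹ * L2norm (pderivX (pderivX v)) :=
  L2norm_le_of_slices (memLp_pderivX (remX_mem_boundedLipschitz hn hv)) (memLp_pderivX hvx)
    (by positivity) fun y => integral_deriv_nodalRem_sq_le_integral_deriv_deriv_sq hn (hslice y)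

end Remainders

namespace IsTestFunction

variable {n k m : ℕ} {u : ℝ × ℝ → ℝ}

lemma contDiff_slice (hu : IsTestFunction m u) (y : ℝ) : ContDiff ℝ m fun x => u (x, y) := by
  have := hu.contDiff
  fun_prop

lemma L2norm_pderivX_remX_le (hu : IsTestFunction 2 u) (hn : 0 < n) :
    L2norm (pderivX (remX n u)) ≤ (n : ℝ)⁻¹ * L2norm (pderivX (pderivX u)) :=
  L2norm_pderivX_remX_le_mul hn hu.mem_boundedLipschitz hu.pderivX.mem_boundedLipschitz
    hu.contDiff_slice

lemma L2norm_remX_le (hu : IsTestFunction 2 u) (hn : 0 < n) :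
    L2norm (remX n u) ≤ (n : ℝ)⁻¹ ^ 2 * L2norm (pderivX (pderivX u)) :=
  calc L2norm (remX n u) ≤ (n : ℝ)⁻¹ * L2norm (pderivX (remX n u)) :=
        L2norm_remX_le_mul hn hu.mem_boundedLipschitz (hu.of_le one_le_two).contDiff_slice
    _ ≤ (n : ℝ)⁻¹ * ((n : ℝ)⁻¹ * L2norm (pderivX (pderivX u))) := by
        gcongr
        exact hu.L2norm_pderivX_remX_le hn
    _ = (n : ℝ)⁻¹ ^ 2 * L2norm (pderivX (pderivX u)) := by ring

lemma L2norm_remY_le (hu : IsTestFunction 2 u) (hn : 0 < n) :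
    L2norm (remY n u) ≤ (n : ℝ)⁻¹ ^ 2 * L2norm (pderivY (pderivY u)) := by
  simpa only [remX_comp_swap, pderivX_comp_swap, L2norm_comp_swap]
    using hu.comp_swap.L2norm_remX_le hn

lemma energyNorm_remX_le (hu : IsTestFunction 2 u) (hn : 0 < n) :
    energyNorm (remX n u) ≤ 2 * (n : ℝ)⁻¹ * semi2 u := by
  have hX := hu.L2norm_pderivX_remX_le hn
  have hY : L2norm (pderivY (remX n u)) ≤ (n : ℝ)⁻¹ * L2norm (pderivX (pderivY u)) := by
    rw [pderivY_remX hu.differentiable]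
    refine (L2norm_remX_le_mul hn hu.pderivY.mem_boundedLipschitz
      hu.pderivY.contDiff_slice).trans ?_
    gcongr
    exact L2norm_pderivX_remX_le_L2norm_pderivX hn hu.pderivY.mem_boundedLipschitz
      hu.pderivY.contDiff_slice
  have h0 := (L2norm_remX_le_L2norm_pderivX_remX hn hu.mem_boundedLipschitz
    (hu.of_le one_le_two).contDiff_slice).trans hX
  have hxy : 0 ≤ (n : ℝ)⁻¹ * L2norm (pderivX (pderivY u)) :=
    mul_nonneg (by positivity) (L2norm_nonneg _)
  have hyy : 0 ≤ (n : ℝ)⁻¹ * L2norm (pderivY (pderivY u)) :=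
    mul_nonneg (by positivity) (L2norm_nonneg _)
  rw [semi2]
  linarith [energyNorm_le (remX_mem_boundedLipschitz hn hu.mem_boundedLipschitz)]

lemma energyNorm_remY_le (hu : IsTestFunction 2 u) (hn : 0 < n) :
    energyNorm (remY n u) ≤ 2 * (n : ℝ)⁻¹ * semi2 u := by
  simpa only [remX_comp_swap, hu.semi2_comp_swap, energyNorm_comp_swap]
    using hu.comp_swap.energyNorm_remX_le hn

lemma L2norm_pderivX_remX_remY_le (hu : IsTestFunction 4 u) (hn : 0 < n) (hk : 0 < k) :
    L2norm (pderivX (remX n (remY k u))) ≤ (n : ℝ)⁻¹ * ((k : ℝ)⁻¹ ^ 2 * L2norm (uxxyy u)) := by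
  have hx : pderivX (remY k u) = remY k (pderivX u) := pderivX_remY hu.differentiable
  have hxx : pderivX (pderivX (remY k u)) = remY k (pderivX (pderivX u)) := by
    rw [hx, pderivX_remY hu.pderivX.differentiable]
  calc L2norm (pderivX (remX n (remY k u)))
      ≤ (n : ℝ)⁻¹ * L2norm (pderivX (pderivX (remY k u))) :=
        L2norm_pderivX_remX_le_mul hn (remY_mem_boundedLipschitz hk hu.mem_boundedLipschitz)
          (hx ▸ remY_mem_boundedLipschitz hk hu.pderivX.mem_boundedLipschitz)
          (contDiff_remY_slice (hu.of_le (by lia)).contDiff)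
    _ ≤ (n : ℝ)⁻¹ * ((k : ℝ)⁻¹ ^ 2 * L2norm (uxxyy u)) := by
        rw [hxx, hu.uxxyy_eq]
        gcongr
        exact hu.pderivX.pderivX.L2norm_remY_le hk

lemma L2norm_pderivY_remX_remY_le (hu : IsTestFunction 4 u) (hn : 0 < n) (hk : 0 < k) :
    L2norm (pderivY (remX n (remY k u))) ≤ (k : ℝ)⁻¹ * ((n : ℝ)⁻¹ ^ 2 * L2norm (uxxyy u)) := by
  simpa only [remY_comp_swap, remX_comp_swap, pderivX_comp_swap, L2norm_comp_swap,
    hu.L2norm_uxxyy_comp_swap, remX_remY_comm] using hu.comp_swap.L2norm_pderivX_remX_remY_le hk hn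

lemma energyNorm_remX_remY_le (hu : IsTestFunction 4 u) (hn : 0 < n) (hk : 0 < k) :
    energyNorm (remX n (remY k u))
      ≤ 2 * (n : ℝ)⁻¹ * (k : ℝ)⁻¹ * ((n : ℝ)⁻¹ + (k : ℝ)⁻¹) * L2norm (uxxyy u) := by
  have hrem := remY_mem_boundedLipschitz hk hu.mem_boundedLipschitz
  have hX := hu.L2norm_pderivX_remX_remY_le hn hk
  have hY := hu.L2norm_pderivY_remX_remY_le hn hk
  have h0 := (L2norm_remX_le_L2norm_pderivX_remX hn hrem
    (contDiff_remY_slice (hu.of_le (by lia)).contDiff)).trans hX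
  have hnonneg : 0 ≤ (k : ℝ)⁻¹ * ((n : ℝ)⁻¹ ^ 2 * L2norm (uxxyy u)) :=
    mul_nonneg (by positivity) (mul_nonneg (by positivity) (L2norm_nonneg _))
  linarith [energyNorm_le (remX_mem_boundedLipschitz hn hrem)]

end IsTestFunction

section MultiscaleInterpolant

lemma sum_Icc_reflect {M : Type*} [AddCommMonoid M] (f : ℕ → M) (k : ℕ) :
    ∑ i ∈ Icc 1 k, f (k + 1 - i) = ∑ i ∈ Icc 1 k, f i :=
  sum_nbij' (k + 1 - ·) (k + 1 - ·) (by simp; lia) (by simp; lia) (by simp; lia) (by simp; lia)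
    (by simp)

lemma sum_range_succ_eq_add_sum_Icc {M : Type*} [AddCommMonoid M] (f : ℕ → M) (k : ℕ) :
    ∑ i ∈ range (k + 1), f i = f 0 + ∑ i ∈ Icc 1 k, f i := by
  rw [range_eq_Ico, sum_eq_sum_Ico_succ_bot k.succ_pos]
  rfl

lemma msInterp_eq_sum_interp (N k : ℕ) (u : ℝ × ℝ → ℝ) :
    msInterp N k u = ∑ i ∈ range (k + 1), interp (N / 2 ^ i) (N / 2 ^ (k - i)) u
      - ∑ i ∈ Icc 1 k, interp (N / 2 ^ i) (N / 2 ^ (k + 1 - i)) u := by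
  ext p
  simp [msInterp]

lemma sub_msInterp_eq (N k : ℕ) (u : ℝ × ℝ → ℝ) :
    u - msInterp N k u = remX N u + remY N u
      - ∑ i ∈ range (k + 1), remX (N / 2 ^ i) (remY (N / 2 ^ (k - i)) u)
      + ∑ i ∈ Icc 1 k, remX (N / 2 ^ i) (remY (N / 2 ^ (k + 1 - i)) u) := by
  have hX := sum_range_succ_eq_add_sum_Icc (fun i => remX (N / 2 ^ i) u) k
  have hY := sum_range_succ_eq_add_sum_Icc (fun i => remY (N / 2 ^ i) u) k
  rw [← sum_flip fun i => remY (N / 2 ^ i) u, ← sum_Icc_reflect fun i => remY (N / 2 ^ i) u] at hY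
  simp only [pow_zero, Nat.div_one] at hX hY
  simp only [msInterp_eq_sum_interp, interp_eq_sub_rem, sum_add_distrib, sum_sub_distrib, hX, hY,
    sum_const, card_range, Nat.card_Icc, Nat.add_sub_cancel, succ_nsmul]
  abel

variable {N k : ℕ} {u : ℝ × ℝ → ℝ}

lemma div_two_pow_pos (hN : 0 < N) {i : ℕ} (hi : 2 ^ i ∣ N) : 0 < N / 2 ^ i :=
  Nat.div_pos (Nat.le_of_dvd hN hi) (by positivity)

lemma remX_remY_dyadic_mem_boundedLipschitz (hu : u ∈ boundedLipschitz (ℝ × ℝ)) (hN : 0 < N)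
    {i j : ℕ} (hi : 2 ^ i ∣ N) (hj : 2 ^ j ∣ N) :
    remX (N / 2 ^ i) (remY (N / 2 ^ j) u) ∈ boundedLipschitz (ℝ × ℝ) :=
  remX_mem_boundedLipschitz (div_two_pow_pos hN hi)
    (remY_mem_boundedLipschitz (div_two_pow_pos hN hj) hu)

lemma energyNorm_remX_remY_dyadic_le (hu : IsTestFunction 4 u) (hN : 0 < N) {i j s : ℕ}
    (hs : i + j = s) (hi : 2 ^ i ∣ N) (hj : 2 ^ j ∣ N) :
    energyNorm (remX (N / 2 ^ i) (remY (N / 2 ^ j) u))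
      ≤ 2 * 2 ^ s * (N : ℝ)⁻¹ ^ 3 * L2norm (uxxyy u) * (2 ^ i + 2 ^ j) := by
  have hcast : ∀ l : ℕ, 2 ^ l ∣ N → ((N / 2 ^ l : ℕ) : ℝ)⁻¹ = 2 ^ l * (N : ℝ)⁻¹ := fun l hl => by
    rw [Nat.cast_div hl (by positivity), inv_div, Nat.cast_pow, Nat.cast_ofNat, div_eq_mul_inv]
  refine (hu.energyNorm_remX_remY_le (div_two_pow_pos hN hi) (div_two_pow_pos hN hj)).trans_eq ?_
  rw [hcast i hi, hcast j hj, ← hs, pow_add]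
  ring

lemma sum_two_pow_add_two_pow_reflect_le (k : ℕ) :
    ∑ i ∈ range (k + 1), ((2 : ℝ) ^ i + 2 ^ (k - i)) ≤ 4 * 2 ^ k := by
  rw [sum_add_distrib, sum_flip fun i => (2 : ℝ) ^ i, geom_sum_eq (by norm_num)]
  linarith [pow_succ (2 : ℝ) k]

lemma sum_Icc_two_pow_add_two_pow_reflect_le (k : ℕ) :
    ∑ i ∈ Icc 1 k, ((2 : ℝ) ^ i + 2 ^ (k + 1 - i)) ≤ 4 * 2 ^ k := by
  have h := sum_range_succ_eq_add_sum_Icc (fun i => (2 : ℝ) ^ i) k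
  rw [geom_sum_eq (by norm_num)] at h
  rw [sum_add_distrib, sum_Icc_reflect fun i => (2 : ℝ) ^ i]
  linarith [pow_succ (2 : ℝ) k, pow_zero (2 : ℝ)]

lemma energyNorm_sum_remX_remY_dyadic_le (hu : IsTestFunction 4 u) (hN : 0 < N) {s : ℕ}
    {t : Finset ℕ} (ht : ∀ i ∈ t, i ≤ s ∧ 2 ^ i ∣ N ∧ 2 ^ (s - i) ∣ N)
    (hsum : ∑ i ∈ t, ((2 : ℝ) ^ i + 2 ^ (s - i)) ≤ 4 * 2 ^ k) :
    energyNorm (∑ i ∈ t, remX (N / 2 ^ i) (remY (N / 2 ^ (s - i)) u))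
      ≤ 8 * 2 ^ s * 2 ^ k * (N : ℝ)⁻¹ ^ 3 * L2norm (uxxyy u) := by
  have hL : 0 ≤ 2 * 2 ^ s * (N : ℝ)⁻¹ ^ 3 * L2norm (uxxyy u) :=
    mul_nonneg (by positivity) (L2norm_nonneg _)
  calc _ ≤ ∑ i ∈ t, energyNorm (remX (N / 2 ^ i) (remY (N / 2 ^ (s - i)) u)) :=
        energyNorm_sum_le t fun i hi =>
          remX_remY_dyadic_mem_boundedLipschitz hu.mem_boundedLipschitz hN
            (ht i hi).2.1 (ht i hi).2.2
    _ ≤ ∑ i ∈ t, 2 * 2 ^ s * (N : ℝ)⁻¹ ^ 3 * L2norm (uxxyy u) * (2 ^ i + 2 ^ (s - i)) :=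
        sum_le_sum fun i hi => energyNorm_remX_remY_dyadic_le hu hN
          (Nat.add_sub_of_le (ht i hi).1) (ht i hi).2.1 (ht i hi).2.2
    _ ≤ 2 * 2 ^ s * (N : ℝ)⁻¹ ^ 3 * L2norm (uxxyy u) * (4 * 2 ^ k) := by
        rw [← mul_sum]
        gcongr
    _ = _ := by ring

lemma energyNorm_sub_msInterp_le (hu : IsTestFunction 4 u) (hN : 0 < N) (hk : 2 ^ k ∣ N) :
    energyNorm (u - msInterp N k u)
      ≤ 4 * (N : ℝ)⁻¹ * semi2 u + 24 * (2 ^ k) ^ 2 * (N : ℝ)⁻¹ ^ 3 * L2norm (uxxyy u) := by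
  have hdvd : ∀ l ≤ k, 2 ^ l ∣ N := fun l hl => (pow_dvd_pow 2 hl).trans hk
  have hlevel : ∀ i ∈ range (k + 1), i ≤ k ∧ 2 ^ i ∣ N ∧ 2 ^ (k - i) ∣ N := fun i hi => by
    rw [mem_range] at hi
    exact ⟨by lia, hdvd _ (by lia), hdvd _ (by lia)⟩
  have hlevel' : ∀ i ∈ Icc 1 k, i ≤ k + 1 ∧ 2 ^ i ∣ N ∧ 2 ^ (k + 1 - i) ∣ N := fun i hi => by
    rw [mem_Icc] at hi
    exact ⟨by lia, hdvd _ (by lia), hdvd _ (by lia)⟩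
  have hub := (hu.of_le (m := 2) (by lia)).mem_boundedLipschitz
  have hX := remX_mem_boundedLipschitz hN hub
  have hY := remY_mem_boundedLipschitz hN hub
  have hS : ∑ i ∈ range (k + 1), remX (N / 2 ^ i) (remY (N / 2 ^ (k - i)) u)
      ∈ boundedLipschitz (ℝ × ℝ) := sum_mem fun i hi =>
    remX_remY_dyadic_mem_boundedLipschitz hub hN (hlevel i hi).2.1 (hlevel i hi).2.2
  have hS' : ∑ i ∈ Icc 1 k, remX (N / 2 ^ i) (remY (N / 2 ^ (k + 1 - i)) u)
      ∈ boundedLipschitz (ℝ × ℝ) := sum_mem fun i hi =>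
    remX_remY_dyadic_mem_boundedLipschitz hub hN (hlevel' i hi).2.1 (hlevel' i hi).2.2
  have h1 := energyNorm_sum_remX_remY_dyadic_le hu hN hlevel (sum_two_pow_add_two_pow_reflect_le k)
  have h2 := energyNorm_sum_remX_remY_dyadic_le hu hN hlevel'
    (sum_Icc_two_pow_add_two_pow_reflect_le k)
  rw [pow_succ] at h2
  rw [sub_msInterp_eq]
  linarith [energyNorm_add_le (sub_mem (add_mem hX hY) hS) hS',
    energyNorm_sub_le (add_mem hX hY) hS, energyNorm_add_le hX hY,
    (hu.of_le (m := 2) (by lia)).energyNorm_remX_le hN,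
    (hu.of_le (m := 2) (by lia)).energyNorm_remY_le hN]

lemma energyNorm_sub_msInterp_le_inv_mul (hu : IsTestFunction 4 u) (hN : 0 < N) (hk : 2 ^ k ∣ N) :
    energyNorm (u - msInterp N k u) ≤ 24 * (N : ℝ)⁻¹ * (semi2 u + L2norm (uxxyy u)) := by
  have hsemi : 0 ≤ (N : ℝ)⁻¹ * semi2 u :=
    mul_nonneg (by positivity) (add_nonneg (add_nonneg (L2norm_nonneg _) (L2norm_nonneg _))
      (L2norm_nonneg _))
  have hmesh : ((2 : ℝ) ^ k) ^ 2 * (N : ℝ)⁻¹ ^ 3 ≤ (N : ℝ)⁻¹ := by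
    have hratio : (2 : ℝ) ^ k * (N : ℝ)⁻¹ ≤ 1 :=
      mul_inv_le_one_of_le₀ (by exact_mod_cast Nat.le_of_dvd hN hk) (by positivity)
    calc ((2 : ℝ) ^ k) ^ 2 * (N : ℝ)⁻¹ ^ 3 = (2 ^ k * (N : ℝ)⁻¹) ^ 2 * (N : ℝ)⁻¹ := by ring
      _ ≤ 1 * (N : ℝ)⁻¹ := by
          gcongr
          exact pow_le_one₀ (by positivity) hratio
      _ = (N : ℝ)⁻¹ := one_mul _
  linarith [energyNorm_sub_msInterp_le hu hN hk,
    mul_le_mul_of_nonneg_right hmesh (L2norm_nonneg (uxxyy u))]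

end MultiscaleInterpolant

section MultiscaleSpace

variable {n k i j l N : ℕ} {u : ℝ × ℝ → ℝ}

lemma hat_eq_add_hat_two_mul (hn : 0 < n) (i : ℕ) (x : ℝ) :
    hat n (i + 1) x = 1 / 2 * hat (2 * n) (2 * i + 1) x + hat (2 * n) (2 * i + 2) x
      + 1 / 2 * hat (2 * n) (2 * i + 3) x := by
  have hn2 : 0 < 2 * n := by lia
  simp only [hat_eq_max hn, hat_eq_max hn2]
  push_cast
  grind

lemma hat_eq_zero_of_notMem_Ioo (hi : i ∈ Icc 1 (n - 1)) {x : ℝ} (hx : x ∉ Set.Ioo (0 : ℝ) 1) :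
    hat n i x = 0 := by
  obtain ⟨h1, h2⟩ := mem_Icc.1 hi
  have hi1 : (1 : ℝ) ≤ i := by exact_mod_cast h1
  have hin : (i : ℝ) + 1 ≤ n := by exact_mod_cast (show i + 1 ≤ n by lia)
  rw [hat_eq_max (by lia), max_eq_left]
  rw [Set.mem_Ioo, not_and_or, not_lt, not_lt] at hx
  rcases hx with hx | hx
  · nlinarith [neg_abs_le (n * x - i)]
  · nlinarith [le_abs_self (n * x - i)]

lemma hat_mul_hat_mem_lipschitzZero (hi : i ∈ Icc 1 (n - 1)) (hj : j ∈ Icc 1 (k - 1)) :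
    (fun p : ℝ × ℝ => hat n i p.1 * hat k j p.2) ∈ lipschitzZero := by
  have hn : 0 < n := by grind
  have hk : 0 < k := by grind
  refine ⟨mul_mem
    (comp_mem_boundedLipschitz (hat_mem_boundedLipschitz hn i) LipschitzWith.prod_fst)
    (comp_mem_boundedLipschitz (hat_mem_boundedLipschitz hk j) LipschitzWith.prod_snd),
    fun p hp => ?_⟩
  rw [Omega2, Set.mem_prod, not_and_or] at hp
  rcases hp with hp | hp
  · simp only [hat_eq_zero_of_notMem_Ioo hi hp, zero_mul]
  · simp only [hat_eq_zero_of_notMem_Ioo hj hp, mul_zero]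

lemma msSpace_le_lipschitzZero (N k : ℕ) : msSpace N k ≤ lipschitzZero := by
  refine Submodule.span_le.2 ?_
  rintro _ ⟨l, -, i, hi, j, hj, rfl⟩
  exact hat_mul_hat_mem_lipschitzZero hi hj

/-- The bilinear finite element functions vanishing on the boundary of the unit square, on the
tensor product mesh with `n × k` cells. -/
def bilinearSpace (n k : ℕ) : Submodule ℝ (ℝ × ℝ → ℝ) :=
  Submodule.span ℝ {g | ∃ i ∈ Icc 1 (n - 1), ∃ j ∈ Icc 1 (k - 1),
    g = fun p : ℝ × ℝ => hat n i p.1 * hat k j p.2}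

lemma hat_mul_hat_mem_bilinearSpace (hi : i ∈ Icc 1 (n - 1)) (hj : j ∈ Icc 1 (k - 1)) :
    (fun p : ℝ × ℝ => hat n i p.1 * hat k j p.2) ∈ bilinearSpace n k :=
  Submodule.subset_span ⟨i, hi, j, hj, rfl⟩

lemma bilinearSpace_le_msSpace (hl : l ≤ k) :
    bilinearSpace (N / 2 ^ l) (N / 2 ^ (k - l)) ≤ msSpace N k :=
  Submodule.span_mono fun _ hg => ⟨l, mem_range_succ_iff.2 hl, hg⟩

lemma bilinearSpace_le_two_mul (n k : ℕ) : bilinearSpace n k ≤ bilinearSpace n (2 * k) := by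
  refine Submodule.span_le.2 ?_
  rintro _ ⟨i, hi, j, hj, rfl⟩
  obtain ⟨hj1, hjk⟩ := mem_Icc.1 hj
  obtain ⟨j, rfl⟩ := Nat.exists_eq_add_of_le' hj1
  have hfine : ∀ j' ∈ Icc (2 * j + 1) (2 * j + 3),
      (fun p : ℝ × ℝ => hat n i p.1 * hat (2 * k) j' p.2) ∈ bilinearSpace n (2 * k) :=
    fun j' hj' => hat_mul_hat_mem_bilinearSpace hi (by grind)
  have hsplit : (fun p : ℝ × ℝ => hat n i p.1 * hat k (j + 1) p.2)
      = (1 / 2 : ℝ) • (fun p : ℝ × ℝ => hat n i p.1 * hat (2 * k) (2 * j + 1) p.2)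
        + (fun p : ℝ × ℝ => hat n i p.1 * hat (2 * k) (2 * j + 2) p.2)
        + (1 / 2 : ℝ) • (fun p : ℝ × ℝ => hat n i p.1 * hat (2 * k) (2 * j + 3) p.2) := by
    ext p
    simp only [Pi.add_apply, Pi.smul_apply, smul_eq_mul, hat_eq_add_hat_two_mul (n := k) (by lia)]
    ring
  rw [SetLike.mem_coe, hsplit]
  exact add_mem (add_mem (Submodule.smul_mem _ _ (hfine _ (by simp))) (hfine _ (by simp)))
    (Submodule.smul_mem _ _ (hfine _ (by simp)))

lemma interp_mem_bilinearSpace (hu : VanishOnBoundary u) (hn : 0 < n) (hk : 0 < k) :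
    interp n k u ∈ bilinearSpace n k := by
  have hsum : interp n k u = ∑ i ∈ range (n + 1), ∑ j ∈ range (k + 1),
      u ((i : ℝ) / n, (j : ℝ) / k) • fun p : ℝ × ℝ => hat n i p.1 * hat k j p.2 := by
    ext p
    simp only [interp, Finset.sum_apply, Pi.smul_apply, smul_eq_mul, mul_assoc]
  have hnode : ∀ {m a : ℕ}, 0 < m → a ∈ range (m + 1) → (a / m : ℝ) ∈ Set.Icc (0 : ℝ) 1 :=
    fun hm ha => ⟨by positivity, (div_le_one₀ (by exact_mod_cast hm)).2
      (by exact_mod_cast mem_range_succ_iff.1 ha)⟩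
  rw [hsum]
  refine sum_mem fun i hi => sum_mem fun j hj => ?_
  by_cases hinterior : i ∈ Icc 1 (n - 1) ∧ j ∈ Icc 1 (k - 1)
  · exact Submodule.smul_mem _ _ (hat_mul_hat_mem_bilinearSpace hinterior.1 hinterior.2)
  · have hboundary : i = 0 ∨ i = n ∨ j = 0 ∨ j = k := by grind
    rw [hu _ ⟨hnode hn hi, hnode hk hj⟩, zero_smul]
    · exact zero_mem _
    · rcases hboundary with rfl | rfl | rfl | rfl <;> simp [hn.ne', hk.ne']

lemma two_mul_div_two_pow_succ (h : 2 ^ (l + 1) ∣ N) : 2 * (N / 2 ^ (l + 1)) = N / 2 ^ l := by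
  rw [pow_succ] at h ⊢
  rw [← Nat.div_div_eq_div_mul, Nat.mul_div_cancel' (Nat.dvd_div_of_mul_dvd h)]

lemma msInterp_mem_msSpace (hu : VanishOnBoundary u) (hN : 0 < N) (hk : 2 ^ k ∣ N) :
    msInterp N k u ∈ msSpace N k := by
  have hdvd : ∀ l ≤ k, 2 ^ l ∣ N := fun l hl => (pow_dvd_pow 2 hl).trans hk
  rw [msInterp_eq_sum_interp]
  refine sub_mem (sum_mem fun i hi => ?_) (sum_mem fun i hi => ?_)
  · have hik : i ≤ k := mem_range_succ_iff.1 hi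
    exact bilinearSpace_le_msSpace hik <| interp_mem_bilinearSpace hu
      (div_two_pow_pos hN (hdvd i hik)) (div_two_pow_pos hN (hdvd _ (by lia)))
  · obtain ⟨h1, hik⟩ := mem_Icc.1 hi
    have hfine : 2 ^ (k - i + 1) ∣ N := hdvd _ (by lia)
    refine bilinearSpace_le_msSpace hik ?_
    rw [show k + 1 - i = k - i + 1 by lia, ← two_mul_div_two_pow_succ hfine]
    exact bilinearSpace_le_two_mul _ _ <| interp_mem_bilinearSpace hu
      (div_two_pow_pos hN (hdvd i hik)) (div_two_pow_pos hN hfine)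

end MultiscaleSpace

section ErrorBound

variable {u v : ℝ × ℝ → ℝ}

lemma VanishOnBoundary.congr (hu : VanishOnBoundary u) (h : Set.EqOn u v unitSquare) :
    VanishOnBoundary v :=
  fun p hp hbd => h hp ▸ hu p hp hbd

lemma L2norm_uxxyy_congr (h : Set.EqOn u v Omega2) : L2norm (uxxyy u) = L2norm (uxxyy v) :=
  have hO := isOpen_Omega2
  L2norm_congr (pderivX_congr hO (pderivX_congr hO (pderivY_congr hO (pderivY_congr hO h))))

lemma semi2_congr (h : Set.EqOn u v Omega2) : semi2 u = semi2 v := by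
  have hO := isOpen_Omega2
  rw [semi2, L2norm_congr (pderivX_congr hO (pderivX_congr hO h)),
    L2norm_congr (pderivX_congr hO (pderivY_congr hO h)),
    L2norm_congr (pderivY_congr hO (pderivY_congr hO h)), semi2]

lemma neg_laplacian_add_eqOn (h : Set.EqOn u v Omega2) :
    Set.EqOn (fun p => -(pderivX (pderivX u) p + pderivY (pderivY u) p) + u p)
      (fun p => -(pderivX (pderivX v) p + pderivY (pderivY v) p) + v p) Omega2 := fun p hp => by
  simp only [pderivX_congr isOpen_Omega2 (pderivX_congr isOpen_Omega2 h) hp,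
    pderivY_congr isOpen_Omega2 (pderivY_congr isOpen_Omega2 h) hp, h hp]

theorem multiscale_FEM_error_bound_general {N k : ℕ} (hN : 0 < N) (hk : 2 ^ k ∣ N)
    {u f : ℝ × ℝ → ℝ} (hu : C4Near u) (hbd : VanishOnBoundary u)
    (hf : ∀ p ∈ Omega2, -(pderivX (pderivX u) p + pderivY (pderivY u) p) + u p = f p)
    {uh : ℝ × ℝ → ℝ} (huh : uh ∈ msSpace N k)
    (hgal : ∀ v ∈ msSpace N k, Bform uh v = ∫ p in Omega2, f p * v p) :
    energyNorm (fun p => u p - uh p) ≤ 24 * (N : ℝ)⁻¹ * (semi2 u + L2norm (uxxyy u)) := by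
  obtain ⟨w, hw, huw⟩ := hu.exists_isTestFunction
  have hO : Set.EqOn u w Omega2 := huw.mono Omega2_subset_unitSquare
  have hgal_w : ∀ v ∈ msSpace N k, Bform uh v = Bform w v := fun v hv => by
    rw [hgal v hv, Bform_eq_integral_neg_laplacian_add (hw.of_le (by lia))
      (msSpace_le_lipschitzZero N k hv)]
    exact setIntegral_congr_fun measurableSet_Omega2 fun p hp =>
      congrArg (· * v p) ((hf p hp).symm.trans (neg_laplacian_add_eqOn hO hp))
  calc energyNorm (fun p => u p - uh p) = energyNorm (w - uh) :=
        energyNorm_congr fun p hp => congrArg (· - uh p) (hO hp)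
    _ ≤ energyNorm (w - msInterp N k w) :=
        energyNorm_sub_le_of_galerkin (msSpace_le_lipschitzZero N k) hw.mem_boundedLipschitz huh
          (msInterp_mem_msSpace (hbd.congr huw) hN hk) hgal_w
    _ ≤ 24 * (N : ℝ)⁻¹ * (semi2 w + L2norm (uxxyy w)) :=
        energyNorm_sub_msInterp_le_inv_mul hw hN hk
    _ = 24 * (N : ℝ)⁻¹ * (semi2 u + L2norm (uxxyy u)) := by
        rw [semi2_congr hO, L2norm_uxxyy_congr hO]

end ErrorBound

/-- Energy-norm error bound for the multiscale sparse grid finite element method at the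
maximal level `k̃ = m − 1`, `N = 2^m`. -/
theorem multiscale_FEM_error_bound :
    ∃ C : ℝ, 0 < C ∧ ∀ m : ℕ, 1 ≤ m →
      ∀ u f : ℝ × ℝ → ℝ, C4Near u → VanishOnBoundary u →
        (∀ p ∈ Omega2, -(pderivX (pderivX u) p + pderivY (pderivY u) p) + u p = f p) →
        ∀ uh : ℝ × ℝ → ℝ, uh ∈ msSpace (2 ^ m) (m - 1) →
          (∀ v ∈ msSpace (2 ^ m) (m - 1), Bform uh v = ∫ p in Omega2, f p * v p) →
          energyNorm (fun p => u p - uh p) ≤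
            C * ((2 : ℝ) ^ m)⁻¹ * (semi2 u + L2norm (uxxyy u)) :=
  ⟨24, by norm_num, fun m _ u f hu hbd hf uh huh hgal => by
    simpa using multiscale_FEM_error_bound_general (by positivity)
      (pow_dvd_pow 2 (m.sub_le 1)) hu hbd hf huh hgal⟩
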